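/- Every planar graph is 5-choosable; that is, for every planar graph G and every list assignment L for G with |L(v)| ≥ 5 for every vertex v of G, G has an L-coloring. -/

import Mathlib

/-!
Common definitions: plane graphs (given by a concrete embedding in the plane),
outer face, canvases, list colorings, governments, harmonicas and coloring
harmonicas, following Postle–Thomas,
"Five-list-coloring graphs on surfaces III".
-/

open Set

universe u

/-- A finite simple graph together with an embedding in the plane:
each vertex gets a point, each edge a simple arc joining its endpoints;
arcs avoid other vertices, and two distinct edges meet only in common
endpoints. -/
structure PlaneGraph (V : Type u) where
  verts : Set V
  Adj : V → V → Prop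
  finite_verts : verts.Finite
  adj_symm : ∀ u v, Adj u v → Adj v u
  adj_irrefl : ∀ v, ¬Adj v v
  adj_mem : ∀ u v, Adj u v → u ∈ verts
  pos : V → ℝ × ℝ
  arc : Sym2 V → Set (ℝ × ℝ)
  pos_injOn : Set.InjOn pos verts
  arc_arc : ∀ u v, Adj u v → ∃ f : ℝ → ℝ × ℝ,
    ContinuousOn f (Set.Icc 0 1) ∧ Set.InjOn f (Set.Icc 0 1) ∧
    f '' Set.Icc 0 1 = arc s(u, v) ∧ f 0 = pos u ∧ f 1 = pos v
  arc_avoid : ∀ u v, Adj u v → ∀ w ∈ verts, pos w ∈ arc s(u, v) → w = u ∨ w = v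
  arc_meet : ∀ u v x y, Adj u v → Adj x y → s(u, v) ≠ s(x, y) →
    arc s(u, v) ∩ arc s(x, y) ⊆ pos '' (({u, v} : Set V) ∩ ({x, y} : Set V))

namespace PlaneGraph

variable {V : Type u}

/-- The point set of the drawing of the plane graph. -/
def image (G : PlaneGraph V) : Set (ℝ × ℝ) :=
  G.pos '' G.verts ∪ ⋃ (u : V) (v : V) (_ : G.Adj u v), G.arc s(u, v)

/-- The outer (unbounded) face of the drawing. -/
def outerFace (G : PlaneGraph V) : Set (ℝ × ℝ) :=
  {p | p ∉ G.image ∧ ¬Bornology.IsBounded (connectedComponentIn G.imageᶜ p)}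

/-- A vertex incident with (i.e. on the boundary of) the outer face. -/
def OnOuter (G : PlaneGraph V) (v : V) : Prop := G.pos v ∈ frontier G.outerFace

/-- An edge incident with (i.e. on the boundary of) the outer face. -/
def EdgeOnOuter (G : PlaneGraph V) (u v : V) : Prop :=
  G.arc s(u, v) ⊆ frontier G.outerFace

/-- The vertices of the boundary of the outer face. -/
def boundaryVerts (G : PlaneGraph V) : Set V := {v | v ∈ G.verts ∧ G.OnOuter v}

/-- Connectivity of a plane graph. -/
def Connected (G : PlaneGraph V) : Prop :=
  G.verts.Nonempty ∧ ∀ u ∈ G.verts, ∀ v ∈ G.verts, Relation.ReflTransGen G.Adj u v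

/-- `H` is a (plane) subgraph of `G`, drawn the same way. -/
def IsSubgraph (H G : PlaneGraph V) : Prop :=
  H.verts ⊆ G.verts ∧ (∀ u v, H.Adj u v → G.Adj u v) ∧
  (∀ v ∈ H.verts, H.pos v = G.pos v) ∧
  (∀ u v, H.Adj u v → H.arc s(u, v) = G.arc s(u, v))

/-- Delete a set of vertices (and all incident edges) from a plane graph. -/
def deleteVerts (G : PlaneGraph V) (s : Set V) : PlaneGraph V where
  verts := G.verts \ s
  Adj u v := G.Adj u v ∧ u ∉ s ∧ v ∉ s
  finite_verts := G.finite_verts.subset Set.diff_subset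
  adj_symm := fun u v h => ⟨G.adj_symm u v h.1, h.2.2, h.2.1⟩
  adj_irrefl := fun v h => G.adj_irrefl v h.1
  adj_mem := fun u v h => ⟨G.adj_mem u v h.1, h.2.1⟩
  pos := G.pos
  arc := G.arc
  pos_injOn := G.pos_injOn.mono Set.diff_subset
  arc_arc := fun u v h => G.arc_arc u v h.1
  arc_avoid := fun u v h w hw hm => G.arc_avoid u v h.1 w hw.1 hm
  arc_meet := fun u v x y h h' hne => G.arc_meet u v x y h.1 h'.1 hne

/-- `G` has a proper coloring from the lists `L`. -/
def HasLColoring (G : PlaneGraph V) (L : V → Finset ℕ) : Prop :=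
  ∃ φ : V → ℕ, (∀ v ∈ G.verts, φ v ∈ L v) ∧ ∀ u v, G.Adj u v → φ u ≠ φ v

/-- A vertex of degree exactly one. -/
def DegreeOne (G : PlaneGraph V) (x : V) : Prop :=
  (∃ a, G.Adj x a) ∧ ∀ a b, G.Adj x a → G.Adj x b → a = b

end PlaneGraph

/-- The cyclic successor of an index in a list. -/
def cycNext {V : Type u} (C : List V) (i : Fin C.length) : Fin C.length :=
  ⟨((i : ℕ) + 1) % C.length, Nat.mod_lt _ (lt_of_le_of_lt (Nat.zero_le _) i.isLt)⟩

/-- The list `C` is a cycle of `G` whose image is exactly the boundary of the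
outer face of `G`; i.e. `G` is a plane graph with outer cycle `C`. -/
def PlaneGraph.IsOuterCycle {V : Type u} (G : PlaneGraph V) (C : List V) : Prop :=
  C.Nodup ∧ 3 ≤ C.length ∧ (∀ v ∈ C, v ∈ G.verts) ∧
  (∀ i : Fin C.length, G.Adj (C.get i) (C.get (cycNext C i))) ∧
  frontier G.outerFace =
    G.pos '' {v | v ∈ C} ∪ ⋃ i : Fin C.length, G.arc s(C.get i, C.get (cycNext C i))

/-- `pq` is an edge of the cycle (given as a list) `C`. -/
def IsCycleEdge {V : Type u} (C : List V) (p q : V) : Prop :=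
  ∃ i : Fin C.length, s(p, q) = s(C.get i, C.get (cycNext C i))

/-- `(G, S, L)` is a canvas, where the subgraph `S` of the boundary of the
outer face of `G` is given by its vertex set `Sverts` and adjacency `SAdj`. -/
structure IsCanvas {V : Type u} (G : PlaneGraph V) (Sverts : Set V) (SAdj : V → V → Prop)
    (L : V → Finset ℕ) : Prop where
  sadj_symm : ∀ u v, SAdj u v → SAdj v u
  sadj_sub : ∀ u v, SAdj u v → G.Adj u v
  sadj_mem : ∀ u v, SAdj u v → u ∈ Sverts
  sverts_sub : Sverts ⊆ G.verts
  sverts_outer : ∀ v ∈ Sverts, G.OnOuter v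
  sedges_outer : ∀ u v, SAdj u v → G.EdgeOnOuter u v
  lists_nonempty : ∀ v ∈ G.verts, (L v).Nonempty
  card_inner : ∀ v ∈ G.verts, ¬G.OnOuter v → 5 ≤ (L v).card
  card_outside_S : ∀ v ∈ G.verts, v ∉ Sverts → 3 ≤ (L v).card
  scolorable : ∃ φ : V → ℕ, (∀ v ∈ Sverts, φ v ∈ L v) ∧ ∀ u v, SAdj u v → φ u ≠ φ v

/-- The adjacency relation of the single-edge path `p₁p₂`. -/
def pathAdj {V : Type u} (p1 p2 : V) : V → V → Prop :=
  fun u v => (u = p1 ∧ v = p2) ∨ (u = p2 ∧ v = p1)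

/-- `(G, P, L)` is a canvas whose precolored subgraph is a path `P = p₁p₂` of
length one (in the boundary of the outer face of `G`). -/
def IsPathCanvas {V : Type u} (G : PlaneGraph V) (p1 p2 : V) (L : V → Finset ℕ) : Prop :=
  p1 ≠ p2 ∧ IsCanvas G {p1, p2} (pathAdj p1 p2) L

/-- `c = (c₁, c₂)` is a proper `L`-coloring of the edge `p₁p₂`. -/
def ProperEdgeColoring {V : Type u} (L : V → Finset ℕ) (p1 p2 : V) (c : ℕ × ℕ) : Prop :=
  c.1 ∈ L p1 ∧ c.2 ∈ L p2 ∧ c.1 ≠ c.2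

/-- `Φ_T(P', 𝒞)`: the colorings of the edge `q₁q₂` extendable to an `L`-coloring
of `G` whose restriction to `p₁p₂` lies in `C`. -/
def Phi {V : Type u} (G : PlaneGraph V) (L : V → Finset ℕ) (p1 p2 q1 q2 : V)
    (C : Set (ℕ × ℕ)) : Set (ℕ × ℕ) :=
  {c | ∃ φ : V → ℕ, (∀ v ∈ G.verts, φ v ∈ L v) ∧ (∀ u v, G.Adj u v → φ u ≠ φ v) ∧
    (φ p1, φ p2) ∈ C ∧ φ q1 = c.1 ∧ φ q2 = c.2}

/-- The set of colors used on the first vertex of the path. -/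
def fstColors (C : Set (ℕ × ℕ)) : Set ℕ := Prod.fst '' C

/-- The set of colors used on the second vertex of the path. -/
def sndColors (C : Set (ℕ × ℕ)) : Set ℕ := Prod.snd '' C

/-- A dictatorship: at least two (distinct) colorings, all agreeing on one of
the two vertices (the dictator). -/
def IsDictatorship (C : Set (ℕ × ℕ)) : Prop :=
  (∃ c ∈ C, ∃ d ∈ C, c ≠ d) ∧
  ((∃ a, ∀ c ∈ C, c.1 = a) ∨ (∃ a, ∀ c ∈ C, c.2 = a))

/-- A democracy: exactly the two colorings `(x, y)` and `(y, x)`. -/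
def IsDemocracy (C : Set (ℕ × ℕ)) : Prop :=
  ∃ x y : ℕ, x ≠ y ∧ C = {(x, y), (y, x)}

/-- A government is a dictatorship or a democracy. -/
def IsGovernment (C : Set (ℕ × ℕ)) : Prop := IsDictatorship C ∨ IsDemocracy C

/-- A confederacy: not a government, but the union of two governments. -/
def IsConfederacy (C : Set (ℕ × ℕ)) : Prop :=
  ¬IsGovernment C ∧ ∃ C1 C2 : Set (ℕ × ℕ), IsGovernment C1 ∧ IsGovernment C2 ∧ C = C1 ∪ C2

/-- The canvas `(G, p₁p₂, L)` is a harmonica from the path `p₁p₂` to the path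
`q₁q₂` with government `C`. -/
inductive IsHarmonica {V : Type u} (L : V → Finset ℕ) :
    PlaneGraph V → V → V → V → V → Set (ℕ × ℕ) → Prop where
  /-- Rule (i): `G = P = P'`. -/
  | same (G : PlaneGraph V) (p1 p2 q1 q2 : V) (C : Set (ℕ × ℕ))
      (hcanvas : IsPathCanvas G p1 p2 L)
      (hproper : ∀ c ∈ C, ProperEdgeColoring L p1 p2 c)
      (hgov : IsGovernment C)
      (hq : (q1 = p1 ∧ q2 = p2) ∨ (q1 = p2 ∧ q2 = p1))
      (hverts : G.verts = {p1, p2})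
      (hedges : ∀ u v, G.Adj u v → pathAdj p1 p2 u v) :
      IsHarmonica L G p1 p2 q1 q2 C
  /-- Rule (ii): `C` is a dictatorship, `G = P ∪ P'`, `V(P) ∩ V(P') = {z}`
  where `z` is the dictator. -/
  | cherry (G : PlaneGraph V) (p1 p2 q1 q2 z : V) (C : Set (ℕ × ℕ))
      (hcanvas : IsPathCanvas G p1 p2 L)
      (hproper : ∀ c ∈ C, ProperEdgeColoring L p1 p2 c)
      (hdict : IsDictatorship C)
      (hq : q1 ≠ q2) (hqadj : G.Adj q1 q2) (hqout : G.EdgeOnOuter q1 q2)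
      (hverts : G.verts = {p1, p2, q1, q2})
      (hedges : ∀ u v, G.Adj u v → pathAdj p1 p2 u v ∨ pathAdj q1 q2 u v)
      (hz : (({p1, p2} : Set V) ∩ ({q1, q2} : Set V)) = {z})
      (hzdict : (z = p1 ∧ ∃ a, ∀ c ∈ C, c.1 = a) ∨ (z = p2 ∧ ∃ a, ∀ c ∈ C, c.2 = a)) :
      IsHarmonica L G p1 p2 q1 q2 C
  /-- Rule (iii): `C` is a dictatorship with dictator `z ∈ V(P)` in color `c`,
  sitting on a triangle `z u₁ u₂`. -/
  | dict (G : PlaneGraph V) (p1 p2 q1 q2 z w u1 u2 : V) (c : ℕ) (L0 : Finset ℕ)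
      (C C' : Set (ℕ × ℕ))
      (hcanvas : IsPathCanvas G p1 p2 L)
      (hproper : ∀ d ∈ C, ProperEdgeColoring L p1 p2 d)
      (hdict : IsDictatorship C)
      (hq : q1 ≠ q2) (hqadj : G.Adj q1 q2) (hqout : G.EdgeOnOuter q1 q2)
      (hz : (z = p1 ∧ w = p2 ∧ (∀ d ∈ C, d.1 = c) ∧
              (u1 = w → sndColors C = (L0 : Set ℕ)) ∧
              (u2 = w → sndColors C = (L0 : Set ℕ))) ∨
            (z = p2 ∧ w = p1 ∧ (∀ d ∈ C, d.2 = c) ∧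
              (u1 = w → fstColors C = (L0 : Set ℕ)) ∧
              (u2 = w → fstColors C = (L0 : Set ℕ))))
      (hzu1 : G.Adj z u1) (hzu2 : G.Adj z u2) (hu12 : G.Adj u1 u2)
      (hL0 : L0.card = 2)
      (hLu1 : u1 ∉ ({p1, p2} : Set V) → L u1 = L0 ∪ {c})
      (hLu2 : u2 ∉ ({p1, p2} : Set V) → L u2 = L0 ∪ {c})
      (hu1P : u1 ∈ ({p1, p2} : Set V) → u1 = w)
      (hu2P : u2 ∈ ({p1, p2} : Set V) → u2 = w)
      (hdem : IsDemocracy C')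
      (hC'1 : fstColors C' = (L0 : Set ℕ)) (hC'2 : sndColors C' = (L0 : Set ℕ))
      (hrec : IsHarmonica L (G.deleteVerts (({p1, p2} : Set V) \ {u1, u2})) u1 u2 q1 q2 C') :
      IsHarmonica L G p1 p2 q1 q2 C
  /-- Rule (iv), with `i = 1`: `C` is a democracy, `z` is a common neighbor of
  `p₁, p₂`, and `p₁` is deleted. -/
  | demo1 (G : PlaneGraph V) (p1 p2 q1 q2 z : V) (a b c : ℕ) (L0 : Finset ℕ)
      (C C' : Set (ℕ × ℕ))
      (hcanvas : IsPathCanvas G p1 p2 L)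
      (hproper : ∀ d ∈ C, ProperEdgeColoring L p1 p2 d)
      (hdemC : IsDemocracy C)
      (hq : q1 ≠ q2) (hqadj : G.Adj q1 q2) (hqout : G.EdgeOnOuter q1 q2)
      (hz1 : G.Adj z p1) (hz2 : G.Adj z p2)
      (hLz : L z = L0 ∪ {c})
      (hC1 : fstColors C = (L0 : Set ℕ)) (hC2 : sndColors C = (L0 : Set ℕ))
      (hab : a ≠ b) (hL0ab : (L0 : Set ℕ) = {a, b})
      (hC' : C' = {(c, a), (c, b)})
      (hrec : IsHarmonica L (G.deleteVerts {p1}) z p2 q1 q2 C') :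
      IsHarmonica L G p1 p2 q1 q2 C
  /-- Rule (iv), with `i = 2`: `C` is a democracy, `z` is a common neighbor of
  `p₁, p₂`, and `p₂` is deleted. -/
  | demo2 (G : PlaneGraph V) (p1 p2 q1 q2 z : V) (a b c : ℕ) (L0 : Finset ℕ)
      (C C' : Set (ℕ × ℕ))
      (hcanvas : IsPathCanvas G p1 p2 L)
      (hproper : ∀ d ∈ C, ProperEdgeColoring L p1 p2 d)
      (hdemC : IsDemocracy C)
      (hq : q1 ≠ q2) (hqadj : G.Adj q1 q2) (hqout : G.EdgeOnOuter q1 q2)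
      (hz1 : G.Adj z p1) (hz2 : G.Adj z p2)
      (hLz : L z = L0 ∪ {c})
      (hC1 : fstColors C = (L0 : Set ℕ)) (hC2 : sndColors C = (L0 : Set ℕ))
      (hab : a ≠ b) (hL0ab : (L0 : Set ℕ) = {a, b})
      (hC' : C' = {(c, a), (c, b)})
      (hrec : IsHarmonica L (G.deleteVerts {p2}) z p1 q1 q2 C') :
      IsHarmonica L G p1 p2 q1 q2 C

/-- `(G, L)` is a coloring harmonica from `uv` to `w` (source `Sum.inr (u, v)`)
or from `u` to `w` (source `Sum.inl u`). -/
inductive IsColoringHarmonica {V : Type u} [DecidableEq V] :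
    PlaneGraph V → (V → Finset ℕ) → V ⊕ V × V → V → Prop where
  /-- `G` is a triangle with vertex set `{u, v, w}`, `L(u) = L(v) = L(w)` and
  `|L(u)| = 2`. -/
  | tri (G : PlaneGraph V) (L : V → Finset ℕ) (u v w : V)
      (hconn : G.Connected) (huv : u ≠ v) (huw : u ≠ w) (hvw : v ≠ w)
      (hu : G.OnOuter u) (hv : G.OnOuter v) (hw : G.OnOuter w)
      (huvout : G.EdgeOnOuter u v)
      (hverts : G.verts = {u, v, w})
      (hadjuv : G.Adj u v) (hadjvw : G.Adj v w) (hadjuw : G.Adj u w)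
      (hLuv : L u = L v) (hLvw : L v = L w) (hcard : (L u).card = 2) :
      IsColoringHarmonica G L (Sum.inr (u, v)) w
  /-- There is a triangle `uvz` on the outer face; delete one or both of
  `u, v` and recurse from `z`. -/
  | step (G : PlaneGraph V) (L : V → Finset ℕ) (u v w z : V) (s : Set V)
      (hconn : G.Connected) (huv : u ≠ v) (huw : u ≠ w) (hvw : v ≠ w)
      (hu : G.OnOuter u) (hv : G.OnOuter v) (hw : G.OnOuter w)
      (huvout : G.EdgeOnOuter u v)
      (hadjuv : G.Adj u v) (hadjuz : G.Adj u z) (hadjvz : G.Adj v z)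
      (hz : G.OnOuter z)
      (hLuv : L u = L v) (hsub : L u ⊆ L z)
      (hcardu : (L u).card = 2) (hcardz : (L z).card = 3)
      (hs : s = {u} ∨ s = {v} ∨ s = ({u, v} : Set V))
      (hrec : IsColoringHarmonica (G.deleteVerts s)
        (Function.update L z (L z \ L u)) (Sum.inl z) w) :
      IsColoringHarmonica G L (Sum.inr (u, v)) w
  /-- `|L(u)| = 1`, `u` sits on a triangle `uxy`; delete `u` and recurse
  from `xy`. -/
  | vert (G : PlaneGraph V) (L : V → Finset ℕ) (u w x y : V)
      (hconn : G.Connected) (huw : u ≠ w)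
      (hu : G.OnOuter u) (hw : G.OnOuter w)
      (hx : G.OnOuter x) (hy : G.OnOuter y)
      (hadjux : G.Adj u x) (hadjuy : G.Adj u y) (hadjxy : G.Adj x y)
      (hcardu : (L u).card = 1)
      (hLxy : L x \ L u = L y \ L u) (hcardx : (L x \ L u).card = 2)
      (hrec : IsColoringHarmonica (G.deleteVerts {u})
        (Function.update (Function.update L x (L x \ L u)) y (L y \ L u))
        (Sum.inr (x, y)) w) :
      IsColoringHarmonica G L (Sum.inl u) w

/-- `(G, L)` contains a coloring harmonica `(H, L')` with the given source and
target: `H` is a subgraph of `G` and `L'` agrees with `L` on `V(H)`. -/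
def ContainsColoringHarmonica {V : Type u} [DecidableEq V] (G : PlaneGraph V)
    (L : V → Finset ℕ) (st : V ⊕ V × V) (w : V) : Prop :=
  ∃ (H : PlaneGraph V) (L' : V → Finset ℕ), H.IsSubgraph G ∧
    (∀ x ∈ H.verts, L' x = L x) ∧ IsColoringHarmonica H L' st w

/-- `v` is a cutvertex of the boundary of the outer face of `G`. -/
def BoundaryCutvertex {V : Type u} (G : PlaneGraph V) (v : V) : Prop :=
  ∃ a b : V, a ∈ G.boundaryVerts ∧ b ∈ G.boundaryVerts ∧ a ≠ v ∧ b ≠ v ∧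
    Relation.ReflTransGen (fun x y => G.Adj x y ∧ G.EdgeOnOuter x y) a b ∧
    ¬Relation.ReflTransGen
      (fun x y => G.Adj x y ∧ G.EdgeOnOuter x y ∧ x ≠ v ∧ y ≠ v) a b

open Classical in
/-- The list assignment of the democratic reduction `T(P, L0, x)`:
remove the colors of `L0` from the list of `x` and from the lists of all
neighbors of `P` other than `y`. -/
noncomputable def reducedL {V : Type u} (G : PlaneGraph V) (L : V → Finset ℕ)
    (L0 : Finset ℕ) (Q : List V) (x y : V) : V → Finset ℕ := fun w =>
  if w = x ∨ (w ≠ y ∧ ∃ p ∈ Q, G.Adj w p) then L w \ L0 else L w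

/-- The vertex set of the precolored subgraph of the democratic reduction:
`S ∖ V(P)`, together with `x` as an isolated vertex if its new list is
smaller than 3. -/
def reducedSverts {V : Type u} (Sverts : Set V) (Q : List V) (x : V)
    (L' : V → Finset ℕ) : Set V :=
  {v | (v ∈ Sverts ∧ v ∉ Q) ∨ (v = x ∧ (L' x).card < 3)}

/-- The adjacency of the precolored subgraph of the democratic reduction:
`S ∖ V(P)`. -/
def reducedSAdj {V : Type u} (SAdj : V → V → Prop) (Q : List V) : V → V → Prop :=
  fun u v => SAdj u v ∧ u ∉ Q ∧ v ∉ Q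



theorem exists_clog {A : Type*} [TopologicalSpace A] [SimplyConnectedSpace A]
    [LocallyPathConnectedSpace A] [Inhabited A] (f : A → ℂ) (hf : Continuous f)
    (h0 : ∀ a, f a ≠ 0) : ∃ h : A → ℂ, Continuous h ∧ ∀ a, Complex.exp (h a) = f a := by
  obtain ⟨F, ⟨-, hF⟩, -⟩ := Complex.isCoveringMap_exp.existsUnique_continuousMap_lifts
    (⟨fun a => (⟨f a, h0 a⟩ : {z : ℂ // z ≠ 0}), by fun_prop⟩ : C(A, {z : ℂ // z ≠ 0}))
    default (Complex.log (f default)) (by simp [Complex.exp_log (h0 _)])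
  refine ⟨F, F.continuous, fun a => ?_⟩
  have := congrFun hF a
  simpa using congrArg Subtype.val this

theorem clog_unique (h h' : ℝ → ℂ) (hc : Continuous h) (hc' : Continuous h')
    (he : ∀ s, Complex.exp (h s) = Complex.exp (h' s)) : h 1 - h 0 = h' 1 - h' 0 := by
  have hkey : ∀ s, h s = h' s + (h 0 - h' 0) := by
    intro s
    have := Complex.isCoveringMap_exp.eq_of_comp_eq (g₁ := h) (g₂ := fun s => h' s + (h 0 - h' 0))
      hc (by fun_prop) (by
        funext t
        apply Subtype.ext
        simp only [Function.comp, Complex.exp_add, Complex.exp_sub, he]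
        field_simp [Complex.exp_ne_zero]) 0 (by ring)
    exact congrFun this s
  rw [hkey 1]; ring

theorem exists_winding (f : ℝ → ℂ) (hf : Continuous f) (h0 : ∀ a, f a ≠ 0) (A B : ℂ)
    (hA : Complex.exp A = f 0) (hB : Complex.exp B = f 1) :
    ∃ n : ℤ, ∀ h : ℝ → ℂ, Continuous h → (∀ s, Complex.exp (h s) = f s) →
      h 1 - h 0 = B - A + n * (2 * Real.pi * Complex.I) := by
  obtain ⟨g, hg, hgf⟩ := exists_clog f hf h0
  obtain ⟨a, ha⟩ := Complex.exp_eq_exp_iff_exists_int.1 ((hgf 0).trans hA.symm)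
  obtain ⟨b, hb⟩ := Complex.exp_eq_exp_iff_exists_int.1 ((hgf 1).trans hB.symm)
  refine ⟨b - a, fun h hh hhf => ?_⟩
  rw [clog_unique h g hh hg (fun s => (hhf s).trans (hgf s).symm), ha, hb]
  push_cast; ring

/-- There is no drawing of `K₅` in the plane in which independent edges are disjoint. -/
theorem no_K5_drawing (p : Fin 5 → ℂ) (γ : Fin 5 → Fin 5 → ℝ → ℂ)
    (hc : ∀ i j, i < j → Continuous (γ i j))
    (h0 : ∀ i j, i < j → γ i j 0 = p i) (h1 : ∀ i j, i < j → γ i j 1 = p j)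
    (hd : ∀ i j k l, i < j → k < l → i ≠ k → i ≠ l → j ≠ k → j ≠ l →
      ∀ s t, γ i j s ≠ γ k l t) : False := by
  have hdp : ∀ i j k, i < j → k ≠ i → k ≠ j → ∀ s, γ i j s ≠ p k := by
    intro i j k hij hki hkj s
    obtain ⟨l, hl1, hl2, hl3⟩ : ∃ l : Fin 5, l ≠ i ∧ l ≠ j ∧ l ≠ k := by
      revert i j k; decide
    rcases lt_or_gt_of_ne hl3 with h | h
    · rw [← h1 l k h]; exact hd i j l k hij h hl1.symm hki.symm hl2.symm hkj.symm s 1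
    · rw [← h0 k l h]; exact hd i j k l hij h hki.symm hl1.symm hkj.symm hl2.symm s 0
  have hpp : ∀ i j, i < j → p j - p i ≠ 0 := by
    intro i j hij
    obtain ⟨l, hl1, hl2⟩ : ∃ l : Fin 5, l ≠ i ∧ l ≠ j := by
      revert i j; decide
    rw [sub_ne_zero]
    rcases lt_or_gt_of_ne hl1 with h | h
    · rw [← h1 l i h]; exact (hdp l i j h hl2.symm hij.ne' 1).symm
    · rw [← h0 i l h]; exact (hdp i l j h hij.ne' hl2.symm 0).symm
  -- directions
  let T : Fin 5 → Fin 5 → ℂ := fun i j =>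
    if i < j then Complex.log (p j - p i) else Complex.log (p i - p j) + Real.pi * Complex.I
  have hT : ∀ i j, i ≠ j → Complex.exp (T i j) = p j - p i := by
    intro i j hij
    simp only [T]
    split_ifs with h
    · exact Complex.exp_log (hpp i j h)
    · rw [Complex.exp_add, Complex.exp_pi_mul_I, Complex.exp_log (hpp j i (by omega))]; ring
  have hTs : ∀ i j, i < j → T j i = T i j + Real.pi * Complex.I := by
    intro i j hij
    simp [T, hij, hij.not_gt]
  have hW : ∀ i j k, ∃ n : ℤ, i < j → k ≠ i → k ≠ j → ∀ h : ℝ → ℂ, Continuous h →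
      (∀ s, Complex.exp (h s) = γ i j s - p k) →
      h 1 - h 0 = T k j - T k i + n * (2 * Real.pi * Complex.I) := by
    intro i j k
    by_cases H : i < j ∧ k ≠ i ∧ k ≠ j
    · obtain ⟨hij, hki, hkj⟩ := H
      obtain ⟨n, hn⟩ := exists_winding (fun s => γ i j s - p k) (by have := hc i j hij; fun_prop)
        (fun s => sub_ne_zero.2 (hdp i j k hij hki hkj s)) (T k i) (T k j)
        (by rw [hT k i hki, h0 i j hij]) (by rw [hT k j hkj, h1 i j hij])
      exact ⟨n, fun _ _ _ => hn⟩
    · exact ⟨0, fun a b c => (H ⟨a, b, c⟩).elim⟩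
  choose a ha using hW
  have hR : ∀ i j k l, i < j → k < l → i ≠ k → i ≠ l → j ≠ k → j ≠ l →
      (a i j k + a k l j - a i j l - a k l i : ℂ) * (2 * Real.pi * Complex.I) =
      - (T k j - T k i + (T j l - T j k) - (T l j - T l i) - (T i l - T i k)) := by
    intro i j k l hij hkl hik hil hjk hjl
    have c1 := hc i j hij
    have c2 := hc k l hkl
    obtain ⟨g, hg, hgf⟩ := exists_clog (fun q : ℝ × ℝ => γ i j q.1 - γ k l q.2) (by fun_prop)
      (fun q => sub_ne_zero.2 (hd i j k l hij hkl hik hil hjk hjl _ _))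
    have e1 := ha i j k hij hik.symm hjk.symm (fun s => g (s, 0)) (by fun_prop)
      (fun s => by rw [hgf, h0 k l hkl])
    have e2 := ha i j l hij hil.symm hjl.symm (fun s => g (s, 1)) (by fun_prop)
      (fun s => by rw [hgf, h1 k l hkl])
    have e3 := ha k l i hkl hik hil (fun s => g (0, s) + Real.pi * Complex.I) (by fun_prop)
      (fun s => by rw [Complex.exp_add, Complex.exp_pi_mul_I, hgf, h0 i j hij]; ring)
    have e4 := ha k l j hkl hjk hjl (fun s => g (1, s) + Real.pi * Complex.I) (by fun_prop)
      (fun s => by rw [Complex.exp_add, Complex.exp_pi_mul_I, hgf, h1 i j hij]; ring)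
    linear_combination -e1 - e4 + e2 + e3
  have hpi : (2 * Real.pi * Complex.I : ℂ) ≠ 0 := Complex.two_pi_I_ne_zero
  have D1 : ∀ i j k l, i < j → j < k → k < l → a i j k + a k l j - a i j l - a k l i = 0 := by
    intro i j k l hij hjk hkl
    have h := hR i j k l hij hkl (by omega) (by omega) (by omega) (by omega)
    rw [hTs j k hjk, hTs i k (by omega), hTs j l (by omega), hTs i l (by omega)] at h
    have : ((a i j k + a k l j - a i j l - a k l i : ℤ) : ℂ) = ((0 : ℤ) : ℂ) := by
      apply mul_right_cancel₀ hpi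
      push_cast
      linear_combination h
    exact_mod_cast this
  have D2 : ∀ i j k l, i < k → k < j → j < l → a i j k + a k l j - a i j l - a k l i = 1 := by
    intro i j k l hij hjk hkl
    have h := hR i j k l (by omega) (by omega) (by omega) (by omega) (by omega) (by omega)
    rw [hTs k j hjk, hTs i k (by omega), hTs j l (by omega), hTs i l (by omega)] at h
    have : ((a i j k + a k l j - a i j l - a k l i : ℤ) : ℂ) = ((1 : ℤ) : ℂ) := by
      apply mul_right_cancel₀ hpi
      push_cast
      linear_combination h
    exact_mod_cast this
  have D3 : ∀ i j k l, i < k → k < l → l < j → a i j k + a k l j - a i j l - a k l i = 0 := by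
    intro i j k l hij hjk hkl
    have h := hR i j k l (by omega) (by omega) (by omega) (by omega) (by omega) (by omega)
    rw [hTs k j (by omega), hTs i k (by omega), hTs l j (by omega), hTs i l (by omega)] at h
    have : ((a i j k + a k l j - a i j l - a k l i : ℤ) : ℂ) = ((0 : ℤ) : ℂ) := by
      apply mul_right_cancel₀ hpi
      push_cast
      linear_combination h
    exact_mod_cast this
  have E : ∀ i j k l : Fin 5, i < j → j < k → k < l →
     (a i j k + a k l j - a i j l - a k l i) + (a i k j + a j l k - a i k l - a j l i) +
     (a i l j + a j k l - a i l k - a j k i) = 1 := by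
    intro i j k l h1 h2 h3
    have := D1 i j k l h1 h2 h3
    have := D2 i k j l h1 h2 h3
    have := D3 i l j k h1 h2 h3
    omega
  have := E 0 1 2 3 (by decide) (by decide) (by decide)
  have := E 0 1 2 4 (by decide) (by decide) (by decide)
  have := E 0 1 3 4 (by decide) (by decide) (by decide)
  have := E 0 2 3 4 (by decide) (by decide) (by decide)
  have := E 1 2 3 4 (by decide) (by decide) (by decide)
  omega


/-- Connectivity of a vertex set with respect to an adjacency relation. -/
def KConn {V : Type u} (H : V → V → Prop) (S : Set V) : Prop :=
  ∀ a ∈ S, ∀ b ∈ S, Relation.ReflTransGen (fun u v => H u v ∧ u ∈ S ∧ v ∈ S) a b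

/-- `K₅` is a minor of the graph `H` restricted to `S`. -/
def K5M {V : Type u} (H : V → V → Prop) (S : Set V) : Prop :=
  ∃ B : Fin 5 → Set V, (∀ i, B i ⊆ S) ∧ (∀ i, (B i).Nonempty) ∧ (∀ i, KConn H (B i)) ∧
    (∀ i j, i ≠ j → Disjoint (B i) (B j)) ∧
    ∀ i j, i ≠ j → ∃ a ∈ B i, ∃ b ∈ B j, H a b

theorem KConn.singleton {V : Type u} (H : V → V → Prop) (a : V) : KConn H {a} := by
  rintro u rfl v rfl
  exact .refl

theorem rtg_symm {V : Type u} {H : V → V → Prop} (hs : ∀ u v, H u v → H v u) {S : Set V} {a b : V}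
    (h : Relation.ReflTransGen (fun u v => H u v ∧ u ∈ S ∧ v ∈ S) a b) :
    Relation.ReflTransGen (fun u v => H u v ∧ u ∈ S ∧ v ∈ S) b a := by
  induction h with
  | refl => exact .refl
  | tail _ h ih => exact .head ⟨hs _ _ h.1, h.2.2, h.2.1⟩ ih

theorem rtg_mono_set {V : Type u} {H : V → V → Prop} {S T : Set V} (hST : S ⊆ T) {a b : V}
    (h : Relation.ReflTransGen (fun u v => H u v ∧ u ∈ S ∧ v ∈ S) a b) :
    Relation.ReflTransGen (fun u v => H u v ∧ u ∈ T ∧ v ∈ T) a b :=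
  Relation.ReflTransGen.mono (fun _ _ ⟨p, q, r⟩ => ⟨p, hST q, hST r⟩) _ _ h

/-- If every vertex is reachable from a root, the set is connected. -/
theorem KConn.of_root {V : Type u} {H : V → V → Prop} (hs : ∀ u v, H u v → H v u) {S : Set V}
    (r : V)
    (h : ∀ a ∈ S, Relation.ReflTransGen (fun u v => H u v ∧ u ∈ S ∧ v ∈ S) r a) : KConn H S :=
  fun a ha b hb => (rtg_symm hs (h a ha)).trans (h b hb)

theorem KConn.insert {V : Type u} {H : V → V → Prop} (hs : ∀ u v, H u v → H v u) {S : Set V}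
    (h : KConn H S) {c d : V} (hd : d ∈ S) (hcd : H c d) : KConn H (insert c S) := by
  apply KConn.of_root hs d
  rintro a (rfl | ha)
  · exact .single ⟨hs _ _ hcd, Or.inr hd, Or.inl rfl⟩
  · exact rtg_mono_set (Set.subset_insert _ _) (h d hd a ha)

theorem K5M_of_model {V : Type u} {H H' : V → V → Prop} {S S' : Set V} (M : V → Set V)
    (hsub : ∀ a ∈ S', M a ⊆ S) (hne : ∀ a ∈ S', (M a).Nonempty)
    (hconn : ∀ a ∈ S', KConn H (M a))
    (hdis : ∀ a ∈ S', ∀ b ∈ S', a ≠ b → Disjoint (M a) (M b))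
    (hadj : ∀ a ∈ S', ∀ b ∈ S', H' a b → ∃ u ∈ M a, ∃ v ∈ M b, H u v)
    (hK : K5M H' S') : K5M H S := by
  obtain ⟨B, h1, h2, h3, h4, h5⟩ := hK
  refine ⟨fun i => ⋃ a ∈ B i, M a, ?_, ?_, ?_, ?_, ?_⟩
  · intro i
    exact Set.iUnion₂_subset fun a ha => hsub a (h1 i ha)
  · intro i
    obtain ⟨a, ha⟩ := h2 i
    obtain ⟨u, hu⟩ := hne a (h1 i ha)
    exact ⟨u, Set.mem_biUnion ha hu⟩
  · intro i u hu v hv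
    simp only [Set.mem_iUnion₂, exists_prop] at hu hv
    obtain ⟨a, ha, hu⟩ := hu
    obtain ⟨b, hb, hv⟩ := hv
    have key : ∀ b, Relation.ReflTransGen (fun u v => H' u v ∧ u ∈ B i ∧ v ∈ B i) a b →
        b ∈ B i → ∀ v ∈ M b, Relation.ReflTransGen
        (fun u v => H u v ∧ u ∈ (⋃ a ∈ B i, M a) ∧ v ∈ (⋃ a ∈ B i, M a)) u v := by
      intro b hab
      induction hab with
      | refl =>
        intro _ v hv
        exact rtg_mono_set (Set.subset_biUnion_of_mem (u := M) ha) (hconn a (h1 i ha) u hu v hv)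
      | tail hac hcd ih =>
        rename_i c d
        intro hd v hv
        obtain ⟨s, hs, t, ht, hst⟩ := hadj c (h1 i hcd.2.1) d (h1 i hd) hcd.1
        refine ((ih hcd.2.1 s hs).tail
          ⟨hst, Set.mem_biUnion hcd.2.1 hs, Set.mem_biUnion hd ht⟩).trans ?_
        exact rtg_mono_set (Set.subset_biUnion_of_mem (u := M) hd) (hconn d (h1 i hd) t ht v hv)
    exact key b (h3 i a ha b hb) hb v hv
  · intro i j hij
    rw [Set.disjoint_left]
    intro u hu hv
    simp only [Set.mem_iUnion₂, exists_prop] at hu hv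
    obtain ⟨a, ha, hu⟩ := hu
    obtain ⟨b, hb, hv⟩ := hv
    have hab : a ≠ b := by
      rintro rfl
      exact Set.disjoint_left.1 (h4 i j hij) ha hb
    exact Set.disjoint_left.1 (hdis a (h1 i ha) b (h1 j hb) hab) hu hv
  · intro i j hij
    obtain ⟨a, ha, b, hb, hab⟩ := h5 i j hij
    obtain ⟨u, hu, v, hv, huv⟩ := hadj a (h1 i ha) b (h1 j hb) hab
    exact ⟨u, Set.mem_biUnion ha hu, v, Set.mem_biUnion hb hv, huv⟩

theorem K5M.mono {V : Type u} {H : V → V → Prop} {S T : Set V} (hST : S ⊆ T) (h : K5M H S) :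
    K5M H T := by
  obtain ⟨B, h1, h2⟩ := h
  exact ⟨B, fun i => (h1 i).trans hST, h2⟩

/-- Adding an edge. -/
def addE {V : Type u} (H : V → V → Prop) (c d : V) : V → V → Prop :=
  fun u v => H u v ∨ (u = c ∧ v = d) ∨ (u = d ∧ v = c)

/-- Contracting the edge `xv` onto `x`. -/
def contrE {V : Type u} (H : V → V → Prop) (x v : V) : V → V → Prop :=
  fun a b => a ≠ b ∧ (H a b ∨ (a = x ∧ H v b) ∨ (b = x ∧ H v a))

theorem nok_contrE {V : Type u} {H : V → V → Prop} {S : Set V} {x v : V}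
    (hs : ∀ u v, H u v → H v u) (hx : x ∈ S) (hv : v ∈ S) (hxv : H x v)
    (h : ¬ K5M H S) : ¬ K5M (contrE H x v) (S \ {v}) := by
  classical
  intro hK
  apply h
  refine K5M_of_model (fun a => if a = x then {x, v} else {a}) ?_ ?_ ?_ ?_ ?_ hK
  · intro a ha
    split_ifs
    · rintro b (rfl | rfl) <;> assumption
    · rintro b rfl; exact ha.1
  · intro a ha
    split_ifs
    · exact ⟨x, Or.inl rfl⟩
    · exact ⟨a, rfl⟩
  · intro a ha
    split_ifs
    · exact (KConn.singleton H v).insert hs rfl hxv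
    · exact KConn.singleton H a
  · intro a ha b hb hab
    have h1 := ha.2
    have h2 := hb.2
    simp only [Set.mem_singleton_iff] at h1 h2
    rw [Set.disjoint_left]
    intro u
    split_ifs <;> simp <;> grind
  · rintro a ha b hb ⟨hne, hab⟩
    have h1 := ha.2
    have h2 := hb.2
    rcases hab with h | ⟨rfl, h⟩ | ⟨rfl, h⟩
    · exact ⟨a, by split_ifs with h <;> simp [h], b, by split_ifs with h <;> simp [h], h⟩
    · exact ⟨v, by simp, b, by simp [hne.symm], h⟩
    · exact ⟨a, by simp [hne], v, by simp, hs _ _ h⟩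

/-- Adding the edge `cd` to the part `A`, when there is a connected set `D` outside `A` that,
together with `c`, is connected and adjacent to `d`. -/
theorem nok_addE {V : Type u} {H : V → V → Prop} {S A : Set V} {c d : V} (M : Set V)
    (hs : ∀ u v, H u v → H v u) (hAS : A ⊆ S) (hMS : M ⊆ S) (hcM : c ∈ M) (hM : KConn H M)
    (hMA : ∀ a ∈ M, a ∈ A → a = c) (hd : ∃ m ∈ M, H m d) (hcd : c ≠ d)
    (h : ¬ K5M H S) : ¬ K5M (addE H c d) A := by
  classical
  intro hK
  apply h
  refine K5M_of_model (fun a => if a = c then M else {a}) ?_ ?_ ?_ ?_ ?_ hK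
  · intro a ha
    split_ifs
    · exact hMS
    · rintro b rfl; exact hAS ha
  · intro a ha
    split_ifs
    · exact ⟨c, hcM⟩
    · exact ⟨a, rfl⟩
  · intro a ha
    split_ifs
    · exact hM
    · exact KConn.singleton H a
  · intro a ha b hb hab
    rw [Set.disjoint_left]
    intro u
    split_ifs <;> simp <;> grind
  · obtain ⟨m, hm, hmd⟩ := hd
    rintro a ha b hb (h | ⟨rfl, rfl⟩ | ⟨rfl, rfl⟩)
    · refine ⟨a, ?_, b, ?_, h⟩
      · split_ifs with h
        · rw [h]; exact hcM
        · rfl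
      · split_ifs with h
        · rw [h]; exact hcM
        · rfl
    · exact ⟨m, by simpa using hm, b, by simp [hcd.symm], hmd⟩
    · exact ⟨a, by simp [hcd.symm], m, by simpa using hm, hs _ _ hmd⟩


/-- The inductive set-up: a graph `H` on `S` without `K₅`-minor, an apex `x`, at most two adjacent
precoloured neighbours `P` of `x`, lists of size three at the neighbours of `x` and five elsewhere. -/
structure Inst {V : Type u} (H : V → V → Prop) (S : Set V) (x : V) (P : Set V)
    (L : V → Finset ℕ) : Prop where
  symm : ∀ u v, H u v → H v u
  irr : ∀ v, ¬ H v v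
  fin : S.Finite
  xS : x ∈ S
  nok : ¬ K5M H S
  PS : P ⊆ S
  PN : ∀ p ∈ P, H x p
  Pcl : ∀ p ∈ P, ∀ q ∈ P, p ≠ q → H p q ∧ Disjoint (L p) (L q)
  P3 : ∀ a ∈ P, ∀ b ∈ P, ∀ c ∈ P, a = b ∨ a = c ∨ b = c
  P1 : ∀ p ∈ P, (L p).card = 1
  L3 : ∀ v ∈ S, v ≠ x → v ∉ P → 3 ≤ (L v).card
  L5 : ∀ v ∈ S, v ≠ x → ¬ H x v → 5 ≤ (L v).card

/-- `H - x` restricted to `S` is colourable from `L`. -/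
def Col {V : Type u} (H : V → V → Prop) (S : Set V) (x : V) (L : V → Finset ℕ) : Prop :=
  ∃ φ : V → ℕ, (∀ v ∈ S, v ≠ x → φ v ∈ L v) ∧
    ∀ u ∈ S, ∀ v ∈ S, u ≠ x → v ≠ x → H u v → φ u ≠ φ v

/-- The induction hypothesis. -/
def IH (V : Type u) (n : ℕ) : Prop :=
  ∀ (H : V → V → Prop) (S : Set V) (x : V) (P : Set V) (L : V → Finset ℕ),
    Inst H S x P L → S.ncard < n → Col H S x L

theorem Inst.xP {V : Type u} {H : V → V → Prop} {S : Set V} {x : V} {P : Set V}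
    {L : V → Finset ℕ} (I : Inst H S x P L) : x ∉ P := fun h => I.irr x (I.PN x h)

/-- Case 1: all neighbours of `x` are precoloured. -/
theorem case_small {V : Type u} {H : V → V → Prop} {S : Set V} {x : V} {P : Set V}
    {L : V → Finset ℕ} (I : Inst H S x P L) (ih : IH V S.ncard)
    (hN : ∀ v ∈ S, H x v → v ∈ P) : Col H S x L := by
  classical
  by_cases hS : ∃ w ∈ S, w ≠ x ∧ (P = ∅ ∨ w ∈ P)
  · obtain ⟨w, hwS, hwx, hwP⟩ := hS
    obtain ⟨c, hc⟩ : (L w).Nonempty := by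
      rw [← Finset.card_pos]
      by_cases h : w ∈ P
      · have := I.P1 w h; omega
      · have := I.L3 w hwS hwx h; omega
    have hPw : ∀ p ∈ P, p ≠ w → c ∉ L p := by
      intro p hp hpw hcp
      rcases hwP with rfl | hwP
      · exact hp
      · exact Finset.disjoint_left.1 (I.Pcl p hp w hwP hpw).2 hcp hc
    have hlt : (S \ {x}).ncard < S.ncard :=
      Set.ncard_lt_ncard ⟨Set.sdiff_subset, fun h => (h I.xS).2 rfl⟩ I.fin
    have I' : Inst H (S \ {x}) w (P \ {w}) (fun v => if H w v then L v \ {c} else L v) := by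
      refine ⟨I.symm, I.irr, I.fin.subset Set.sdiff_subset, ⟨hwS, hwx⟩,
        fun h => I.nok (h.mono Set.sdiff_subset), ?_, ?_, ?_, ?_, ?_, ?_, ?_⟩
      · rintro p ⟨hp, hpw⟩
        refine ⟨I.PS hp, ?_⟩
        rintro rfl
        exact I.xP hp
      · rintro p ⟨hp, hpw⟩
        rcases hwP with rfl | hwP
        · exact hp.elim
        · exact (I.Pcl w hwP p hp (fun h => hpw h.symm)).1
      · rintro p ⟨hp, hpw⟩ q ⟨hq, hqw⟩ hpq
        refine ⟨(I.Pcl p hp q hq hpq).1, ?_⟩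
        have := (I.Pcl p hp q hq hpq).2
        rw [Finset.disjoint_left] at this ⊢
        intro a ha hb
        exact @this a (by split_ifs at ha <;> simp_all) (by split_ifs at hb <;> simp_all)
      · intro a ha b hb c hc
        exact I.P3 a ha.1 b hb.1 c hc.1
      · rintro p ⟨hp, hpw⟩
        have := hPw p hp hpw
        have h1 := I.P1 p hp
        split_ifs
        · rwa [Finset.sdiff_singleton_eq_erase, Finset.erase_eq_of_notMem this]
        · exact h1
      · rintro v ⟨hv, hvx⟩ hvw hvP
        have hvP' : v ∉ P := fun h => hvP ⟨h, hvw⟩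
        have := I.L5 v hv hvx (fun h => hvP' (hN v hv h))
        split_ifs
        · have := Finset.le_card_sdiff {c} (L v)
          simp at this; omega
        · omega
      · rintro v ⟨hv, hvx⟩ hvw hwv
        rw [if_neg hwv]
        have hvP' : v ∉ P := by
          intro h
          rcases hwP with rfl | hwP
          · exact h
          · exact hwv (I.Pcl w hwP v h hvw.symm).1
        exact I.L5 v hv hvx (fun h => hvP' (hN v hv h))
    obtain ⟨φ, h1, h2⟩ := ih _ _ _ _ _ I' hlt
    have h1' : ∀ v ∈ S, v ≠ x → v ≠ w → φ v ∈ L v ∧ (H w v → φ v ≠ c) := by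
      intro v hv hvx hvw
      have := h1 v ⟨hv, hvx⟩ hvw
      beta_reduce at this
      split_ifs at this with h <;> simp_all
    refine ⟨Function.update φ w c, ?_, ?_⟩
    · intro v hv hvx
      by_cases h : v = w
      · subst h; simpa using hc
      · simpa [h] using (h1' v hv hvx h).1
    · intro u hu v hv hux hvx huv
      by_cases h : u = w
      · subst h
        have hvu : v ≠ u := by rintro rfl; exact I.irr _ huv
        simpa [hvu] using ((h1' v hv hvx hvu).2 huv).symm
      · by_cases h' : v = w
        · subst h'
          simpa [h] using (h1' u hu hux h).2 (I.symm _ _ huv)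
        · simpa [h, h'] using h2 u ⟨hu, hux⟩ v ⟨hv, hvx⟩ h h' huv
  · have hS' : ∀ w ∈ S, w = x := by
      intro w hw
      by_contra hwx
      rcases P.eq_empty_or_nonempty with hP | ⟨p, hp⟩
      · exact hS ⟨w, hw, hwx, Or.inl hP⟩
      · exact hS ⟨p, I.PS hp, fun h => I.xP (h ▸ hp), Or.inr hp⟩
    exact ⟨fun _ => 0, fun v hv h => (h (hS' v hv)).elim, fun u hu v hv h => (h (hS' u hu)).elim⟩

/-- Case 2: there is a good vertex `v` to be contracted onto `x`. -/
theorem case_good {V : Type u} {H : V → V → Prop} {S : Set V} {x : V} {P : Set V}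
    {L : V → Finset ℕ} (I : Inst H S x P L) (ih : IH V S.ncard) (v : V) (hvS : v ∈ S)
    (hxv : H x v) (hvP : v ∉ P) (T : Finset ℕ) (y : V) (hT : T.card ≤ 1)
    (hy : ∀ u ∈ S, H x u → H v u → u = y ∨ L u ⊆ T) : Col H S x L := by
  classical
  have hvx : v ≠ x := by rintro rfl; exact I.irr _ hxv
  obtain ⟨a, ha, b, hb, hab⟩ : ∃ a ∈ L v \ T, ∃ b ∈ L v \ T, a ≠ b := by
    apply Finset.one_lt_card.1
    have := Finset.le_card_sdiff T (L v)
    have := I.L3 v hvS hvx hvP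
    omega
  simp only [Finset.mem_sdiff] at ha hb
  have hlt : (S \ {v}).ncard < S.ncard :=
    Set.ncard_lt_ncard ⟨Set.sdiff_subset, fun h => (h hvS).2 rfl⟩ I.fin
  have hsub : ∀ u w, H u w → contrE H x v u w := fun u w h =>
    ⟨by rintro rfl; exact I.irr _ h, Or.inl h⟩
  have I' : Inst (contrE H x v) (S \ {v}) x P
      (fun u => if H v u ∧ ¬ H x u then L u \ {a, b} else L u) := by
    refine ⟨?_, fun w h => h.1 rfl, I.fin.subset Set.sdiff_subset, ⟨I.xS, hvx.symm⟩,
      nok_contrE I.symm I.xS hvS hxv I.nok, fun p hp => ⟨I.PS hp, fun h => hvP (h ▸ hp)⟩,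
      fun p hp => hsub _ _ (I.PN p hp), ?_, I.P3, ?_, ?_, ?_⟩
    · rintro u w ⟨h1, h2⟩
      refine ⟨h1.symm, ?_⟩
      rcases h2 with h2 | h2 | h2
      · exact Or.inl (I.symm _ _ h2)
      · exact Or.inr (Or.inr h2)
      · exact Or.inr (Or.inl h2)
    · intro p hp q hq hpq
      have := I.Pcl p hp q hq hpq
      simpa [I.PN p hp, I.PN q hq] using ⟨hsub _ _ this.1, this.2⟩
    · intro p hp
      simpa [I.PN p hp] using I.P1 p hp
    · rintro u ⟨hu, -⟩ hux huP
      split_ifs with h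
      · have := Finset.le_card_sdiff {a, b} (L u)
        have := I.L5 u hu hux h.2
        have : ({a, b} : Finset ℕ).card ≤ 2 := Finset.card_le_two
        omega
      · exact I.L3 u hu hux huP
    · rintro u ⟨hu, -⟩ hux hxu
      have h1 : ¬ H x u := fun h => hxu (hsub _ _ h)
      have h2 : ¬ H v u := fun h => hxu ⟨hux.symm, Or.inr (Or.inl ⟨rfl, h⟩)⟩
      simpa [h2] using I.L5 u hu hux h1
  obtain ⟨φ, h1, h2⟩ := ih _ _ _ _ _ I' hlt
  have h1' : ∀ u ∈ S, u ≠ x → u ≠ v → φ u ∈ L u ∧ (H v u → ¬ H x u → φ u ≠ a ∧ φ u ≠ b) := by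
    intro u hu hux huv
    have := h1 u ⟨hu, huv⟩ hux
    beta_reduce at this
    split_ifs at this with h
    · simp at this
      exact ⟨this.1, fun _ _ => this.2⟩
    · exact ⟨this, fun h3 h4 => (h ⟨h3, h4⟩).elim⟩
  obtain ⟨c, hcab, hcy⟩ : ∃ c, (c = a ∨ c = b) ∧ φ y ≠ c := by
    by_cases h : φ y = a
    · exact ⟨b, Or.inr rfl, by rw [h]; exact hab⟩
    · exact ⟨a, Or.inl rfl, h⟩
  have hcL : c ∈ L v ∧ c ∉ T := by rcases hcab with rfl | rfl <;> assumption
  have hkey : ∀ u ∈ S, u ≠ x → u ≠ v → H v u → φ u ≠ c := by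
    intro u hu hux huv hvu
    by_cases hxu : H x u
    · rcases hy u hu hxu hvu with rfl | h
      · exact hcy
      · intro hh
        exact hcL.2 (hh ▸ h (h1' u hu hux huv).1)
    · have := (h1' u hu hux huv).2 hvu hxu
      rcases hcab with rfl | rfl
      · exact this.1
      · exact this.2
  refine ⟨Function.update φ v c, ?_, ?_⟩
  · intro u hu hux
    by_cases h : u = v
    · subst h; simpa using hcL.1
    · simpa [h] using (h1' u hu hux h).1
  · intro u hu w hw hux hwx huw
    by_cases h : u = v
    · subst h
      have hvu : w ≠ u := by rintro rfl; exact I.irr _ huw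
      simpa [hvu] using (hkey w hw hwx hvu huw).symm
    · by_cases h' : w = v
      · subst h'
        simpa [h] using hkey u hu hux h (I.symm _ _ huw)
      · simpa [h, h'] using h2 u ⟨hu, h⟩ w ⟨hw, h'⟩ hux hwx (hsub _ _ huw)

/-- Case 3: a separation along `x, c, d`. -/
theorem case_sep {V : Type u} {H : V → V → Prop} {S : Set V} {x : V} {P : Set V}
    {L : V → Finset ℕ} (I : Inst H S x P L) (ih : IH V S.ncard) (A B : Set V) (c d : V)
    (hcd : c ≠ d) (hxc : H x c) (hxd : H x d) (hAS : A ⊆ S) (hBS : B ⊆ S)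
    (hAB : ∀ s ∈ S, s ∈ A ∨ s ∈ B) (hx : x ∈ A ∧ x ∈ B) (hc : c ∈ A ∧ c ∈ B)
    (hd : d ∈ A ∧ d ∈ B) (hI : ∀ s, s ∈ A → s ∈ B → s = x ∨ s = c ∨ s = d)
    (hE : ∀ a ∈ A, ∀ b ∈ B, H a b → a ∈ B ∨ b ∈ A)
    (hA : A.ncard < S.ncard) (hB : B.ncard < S.ncard)
    (kA : ¬ K5M (addE H c d) A) (kB : ¬ K5M (addE H c d) B) (hP : P ⊆ A) : Col H S x L := by
  classical
  have hcx : c ≠ x := by rintro rfl; exact I.irr _ hxc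
  have hdx : d ≠ x := by rintro rfl; exact I.irr _ hxd
  have hsy : ∀ u v, addE H c d u v → addE H c d v u := by
    rintro u v (h | ⟨h, h'⟩ | ⟨h, h'⟩)
    · exact Or.inl (I.symm _ _ h)
    · exact Or.inr (Or.inr ⟨h', h⟩)
    · exact Or.inr (Or.inl ⟨h', h⟩)
  have hir : ∀ v, ¬ addE H c d v v := by
    rintro u (h | ⟨h, h'⟩ | ⟨h, h'⟩)
    · exact I.irr _ h
    · exact hcd (h.symm.trans h')
    · exact hcd (h'.symm.trans h)
  have IA : Inst (addE H c d) A x P L := by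
    refine ⟨hsy, hir, I.fin.subset hAS, hx.1, kA, hP, fun p hp => Or.inl (I.PN p hp),
      fun p hp q hq hpq => ⟨Or.inl (I.Pcl p hp q hq hpq).1, (I.Pcl p hp q hq hpq).2⟩,
      I.P3, I.P1, fun v hv => I.L3 v (hAS hv), fun v hv hvx h => ?_⟩
    exact I.L5 v (hAS hv) hvx (fun h' => h (Or.inl h'))
  obtain ⟨φ, h1, h2⟩ := ih _ _ _ _ _ IA hA
  have hφ : φ c ≠ φ d := h2 c hc.1 d hd.1 hcx hdx (Or.inr (Or.inl ⟨rfl, rfl⟩))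
  have IB : Inst (addE H c d) B x {c, d} (fun v => if v = c ∨ v = d then {φ v} else L v) := by
    refine ⟨hsy, hir, I.fin.subset hBS, hx.2, kB, ?_, ?_, ?_, ?_, ?_, ?_, ?_⟩
    · rintro p (rfl | rfl)
      exacts [hc.2, hd.2]
    · rintro p (rfl | rfl)
      exacts [Or.inl hxc, Or.inl hxd]
    · rintro p (rfl | rfl) q (rfl | rfl) hpq
      · exact (hpq rfl).elim
      · exact ⟨Or.inr (Or.inl ⟨rfl, rfl⟩), by simpa using hφ⟩
      · exact ⟨Or.inr (Or.inr ⟨rfl, rfl⟩), by simpa using hφ.symm⟩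
      · exact (hpq rfl).elim
    · rintro p (rfl | rfl) q (rfl | rfl) r (rfl | rfl) <;> simp
    · rintro p (rfl | rfl) <;> simp
    · intro v hv hvx hvP
      have hvP' : ¬ (v = c ∨ v = d) := hvP
      simp only [if_neg hvP']
      refine I.L3 v (hBS hv) hvx (fun h => ?_)
      rcases hI v (hP h) hv with h | h
      · exact hvx h
      · exact hvP' h
    · intro v hv hvx h
      have hvP' : ¬ (v = c ∨ v = d) := by
        rintro (rfl | rfl)
        · exact h (Or.inl hxc)
        · exact h (Or.inl hxd)
      simp only [if_neg hvP']
      exact I.L5 v (hBS hv) hvx (fun h' => h (Or.inl h'))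
  obtain ⟨ψ, h3, h4⟩ := ih _ _ _ _ _ IB hB
  have hψc : ψ c = φ c := by simpa using h3 c hc.2 hcx
  have hψd : ψ d = φ d := by simpa using h3 d hd.2 hdx
  have hag : ∀ s, s ∈ A → s ∈ B → s ≠ x → ψ s = φ s := by
    intro s hs hs' hsx
    rcases hI s hs hs' with h | rfl | rfl
    · exact (hsx h).elim
    · exact hψc
    · exact hψd
  refine ⟨fun v => if v ∈ A then φ v else ψ v, ?_, ?_⟩
  · intro v hv hvx
    by_cases h : v ∈ A
    · simpa [h] using h1 v h hvx
    · have hvB : v ∈ B := (hAB v hv).resolve_left h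
      have hvP' : ¬ (v = c ∨ v = d) := by
        rintro (rfl | rfl)
        · exact h hc.1
        · exact h hd.1
      have := h3 v hvB hvx
      simp only [if_neg hvP'] at this
      simpa [h] using this
  · have main : ∀ u ∈ S, ∀ v ∈ S, u ≠ x → v ≠ x → H u v → u ∈ A → v ∉ A → φ u ≠ ψ v := by
      intro u hu v hv hux hvx huv huA hvA
      have hvB : v ∈ B := (hAB v hv).resolve_left hvA
      have huB : u ∈ B := (hE u huA v hvB huv).resolve_right hvA
      rw [← hag u huA huB hux]
      exact h4 u huB v hvB hux hvx (Or.inl huv)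
    intro u hu v hv hux hvx huv
    by_cases huA : u ∈ A <;> by_cases hvA : v ∈ A
    · simpa [huA, hvA] using h2 u huA v hvA hux hvx (Or.inl huv)
    · simpa [huA, hvA] using main u hu v hv hux hvx huv huA hvA
    · simpa [huA, hvA] using (main v hv u hu hvx hux (I.symm _ _ huv) hvA huA).symm
    · have huB : u ∈ B := (hAB u hu).resolve_left huA
      have hvB : v ∈ B := (hAB v hv).resolve_left hvA
      simpa [huA, hvA] using h4 u huB v hvB hux hvx (Or.inl huv)


/-- A cycle `g 0, …, g (n-1)` inside the set `N`. -/
structure Cyc {V : Type u} (H : V → V → Prop) (N : Set V) (g : ℕ → V) (n : ℕ) : Prop where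
  three : 3 ≤ n
  mem : ∀ i < n, g i ∈ N
  inj : ∀ i < n, ∀ j < n, g i = g j → i = j
  adj : ∀ i, i + 1 < n → H (g i) (g (i + 1))
  close : H (g (n - 1)) (g 0)

theorem exists_cyc {V : Type u} {H : V → V → Prop} {T : Set V} (hs : ∀ u v, H u v → H v u)
    (hir : ∀ v, ¬ H v v) (hT : T.Finite) (hne : T.Nonempty)
    (h2 : ∀ v ∈ T, ∃ a ∈ T, ∃ b ∈ T, a ≠ b ∧ H v a ∧ H v b) : ∃ g n, Cyc H T g n := by
  classical
  by_contra hno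
  have hpath : ∀ n : ℕ, ∃ g : ℕ → V, (∀ i ≤ n, g i ∈ T) ∧
      (∀ i ≤ n, ∀ j ≤ n, g i = g j → i = j) ∧ (∀ i < n, H (g i) (g (i + 1))) := by
    intro n
    induction n with
    | zero =>
      obtain ⟨v, hv⟩ := hne
      exact ⟨fun _ => v, fun _ _ => hv, fun i hi j hj _ => by omega, fun i hi => by omega⟩
    | succ n ih =>
      obtain ⟨g, hg, hinj, hadj⟩ := ih
      have key : ∃ a ∈ T, H (g n) a ∧ ∀ i ≤ n, g i ≠ a := by
        by_contra hcon
        push Not at hcon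
        obtain ⟨a, ha, b, hb, hab, hva, hvb⟩ := h2 (g n) (hg n le_rfl)
        obtain ⟨i, hi, rfl⟩ := hcon a ha hva
        obtain ⟨j, hj, rfl⟩ := hcon b hb hvb
        have hin : i ≠ n := by rintro rfl; exact hir _ hva
        have hjn : j ≠ n := by rintro rfl; exact hir _ hvb
        have hij : i ≠ j := by rintro rfl; exact hab rfl
        obtain ⟨k, hk, hkn⟩ : ∃ k, k + 2 ≤ n ∧ H (g n) (g k) := by
          by_cases h : i < j
          · exact ⟨i, by omega, hva⟩
          · exact ⟨j, by omega, hvb⟩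
        apply hno
        refine ⟨fun t => g (k + t), n - k + 1, by omega, fun t ht => hg _ (by omega), ?_, ?_, ?_⟩
        · intro s hs t ht hst
          have := hinj _ (by omega) _ (by omega) hst
          omega
        · intro t ht
          exact hadj (k + t) (by omega)
        · have : k + (n - k) = n := by omega
          simpa [this] using hkn
      obtain ⟨a, ha, hna, hia⟩ := key
      refine ⟨Function.update g (n + 1) a, ?_, ?_, ?_⟩
      · intro i hi
        by_cases h : i = n + 1
        · simpa [h] using ha
        · simpa [h] using hg i (by omega)
      · intro i hi j hj hij
        by_cases h : i = n + 1 <;> by_cases h' : j = n + 1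
        · omega
        · subst h
          simp only [Function.update_self, Function.update_of_ne h'] at hij
          exact (hia j (by omega) hij.symm).elim
        · subst h'
          simp only [Function.update_self, Function.update_of_ne h] at hij
          exact (hia i (by omega) hij).elim
        · simp only [Function.update_of_ne h', Function.update_of_ne h] at hij
          exact hinj i (by omega) j (by omega) hij
      · intro i hi
        have h : i ≠ n + 1 := by omega
        rw [Function.update_of_ne h]
        by_cases h' : i = n
        · subst h'; simpa using hna
        · have : i + 1 ≠ n + 1 := by omega
          rw [Function.update_of_ne this]
          exact hadj i (by omega)
  obtain ⟨g, hg, hinj, -⟩ := hpath T.ncard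
  have hle : ((Finset.range (T.ncard + 1)).image g).card ≤ T.ncard := by
    rw [← Set.ncard_coe_finset]
    apply Set.ncard_le_ncard _ hT
    intro v hv
    simp only [Finset.coe_image, Set.mem_image, Finset.coe_range, Set.mem_Iio] at hv
    obtain ⟨i, hi, rfl⟩ := hv
    exact hg i (by omega)
  rw [Finset.card_image_of_injOn] at hle
  · simp at hle
  · intro i hi j hj hij
    simp at hi hj
    exact hinj i (by omega) j (by omega) hij

/-- A shortest cycle has no chords. -/
theorem exists_chordless {V : Type u} {H : V → V → Prop} {T : Set V}
    (hs : ∀ u v, H u v → H v u) (h : ∃ g n, Cyc H T g n) :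
    ∃ g n, Cyc H T g n ∧
      ∀ i j, i < j → j < n → H (g i) (g j) → j = i + 1 ∨ (i = 0 ∧ j = n - 1) := by
  classical
  have h' : ∃ n g, Cyc H T g n := by obtain ⟨g, n, h⟩ := h; exact ⟨n, g, h⟩
  obtain ⟨g, hg⟩ := Nat.find_spec h'
  refine ⟨g, Nat.find h', hg, ?_⟩
  intro i j hij hj hH
  by_contra hcon
  push Not at hcon
  have h3 := hg.three
  refine Nat.find_min h' (m := j - i + 1) (by have := hcon.1; have := hcon.2; omega)
    ⟨fun t => g (i + t), by have := hcon.1; omega, fun t ht => hg.mem _ (by omega), ?_, ?_, ?_⟩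
  · intro s hs t ht hst
    have := hg.inj _ (by omega) _ (by omega) hst
    omega
  · intro t ht
    exact hg.adj (i + t) (by omega)
  · have : i + (j - i) = j := by omega
    simpa [this] using hs _ _ hH

theorem cyc_nbrs {V : Type u} {H : V → V → Prop} {T : Set V} {g : ℕ → V} {n : ℕ}
    (hs : ∀ u v, H u v → H v u) (hir : ∀ v, ¬ H v v) (hg : Cyc H T g n)
    (hch : ∀ i j, i < j → j < n → H (g i) (g j) → j = i + 1 ∨ (i = 0 ∧ j = n - 1))
    (i : ℕ) (hi : i < n) : ∃ a b, a < n ∧ b < n ∧ a ≠ b ∧ H (g i) (g a) ∧ H (g i) (g b) ∧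
      ∀ k < n, H (g i) (g k) → k = a ∨ k = b := by
  have h3 := hg.three
  have hk : ∀ k < n, H (g i) (g k) →
      (k = i + 1 ∨ (i = 0 ∧ k = n - 1)) ∨ (i = k + 1 ∨ (k = 0 ∧ i = n - 1)) := by
    intro k hk hik
    rcases lt_trichotomy i k with h | h | h
    · exact Or.inl (hch i k h hk hik)
    · subst h; exact (hir _ hik).elim
    · exact Or.inr (hch k i h hi (hs _ _ hik))
  by_cases h0 : i = 0
  · subst h0
    refine ⟨1, n - 1, by omega, by omega, by omega, hg.adj 0 (by omega), hs _ _ hg.close, ?_⟩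
    intro k hkn h
    have := hk k hkn h
    omega
  · have hpred : H (g i) (g (i - 1)) := by
      have := hg.adj (i - 1) (by omega)
      rw [Nat.sub_add_cancel (by omega)] at this
      exact hs _ _ this
    by_cases h1 : i = n - 1
    · refine ⟨i - 1, 0, by omega, by omega, by omega, hpred, by rw [h1]; exact hg.close, ?_⟩
      intro k hkn h
      have := hk k hkn h
      omega
    · refine ⟨i - 1, i + 1, by omega, by omega, by omega, hpred, hg.adj i (by omega), ?_⟩
      intro k hkn h
      have := hk k hkn h
      omega

theorem cyc_interval {V : Type u} {H : V → V → Prop} {T : Set V} {g : ℕ → V} {n : ℕ}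
    (hs : ∀ u v, H u v → H v u) (hg : Cyc H T g n) (a b : ℕ) (hb : b ≤ n) :
    KConn H {v | ∃ t, a ≤ t ∧ t < b ∧ v = g t} := by
  apply KConn.of_root hs (g a)
  rintro v ⟨t, hat, htb, rfl⟩
  induction t, hat using Nat.le_induction with
  | base => exact .refl
  | succ t hat ih =>
    exact (ih (by omega)).tail ⟨hg.adj t (by omega), ⟨t, hat, by omega, rfl⟩,
      ⟨t + 1, by omega, htb, rfl⟩⟩

/-- Case: the neighbourhood of `x` induces a cycle. -/
theorem case_cycle {V : Type u} {H : V → V → Prop} {S : Set V} {x : V} {P : Set V}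
    {L : V → Finset ℕ} (I : Inst H S x P L) (ih : IH V S.ncard) (g : ℕ → V) (n : ℕ)
    (hg : Cyc H {v | v ∈ S ∧ H x v} g n)
    (hch : ∀ i j, i < j → j < n → H (g i) (g j) → j = i + 1 ∨ (i = 0 ∧ j = n - 1))
    (hall : ∀ v ∈ S, H x v → ∃ t < n, v = g t) (hPne : P.Nonempty) : Col H S x L := by
  obtain ⟨p, hp⟩ := hPne
  obtain ⟨i, hi, rfl⟩ := hall p (I.PS hp) (I.PN p hp)
  obtain ⟨a, b, ha, hb, hab, hia, hib, hiab⟩ := cyc_nbrs I.symm I.irr hg hch i hi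
  obtain ⟨j, hj, hjP, hij⟩ : ∃ j < n, g j ∉ P ∧ H (g i) (g j) := by
    by_cases h : g a ∈ P
    · refine ⟨b, hb, fun h' => ?_, hib⟩
      rcases I.P3 _ hp _ h _ h' with e | e | e
      · rw [← e] at hia; exact I.irr _ hia
      · rw [← e] at hib; exact I.irr _ hib
      · exact hab (hg.inj _ ha _ hb e)
    · exact ⟨a, ha, h, hia⟩
  obtain ⟨c, d, hc, hd, hcd, hjc, hjd, hjcd⟩ := cyc_nbrs I.symm I.irr hg hch j hj
  obtain ⟨y, hy⟩ : ∃ y, ∀ k < n, H (g j) (g k) → k = i ∨ k = y := by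
    rcases hjcd i hi (I.symm _ _ hij) with h | h
    · exact ⟨d, fun k hk hjk => by have := hjcd k hk hjk; omega⟩
    · exact ⟨c, fun k hk hjk => by have := hjcd k hk hjk; omega⟩
  refine case_good I ih (g j) (hg.mem j hj).1 (hg.mem j hj).2 hjP (L (g i)) (g y)
    (I.P1 _ hp).le ?_
  intro u hu hxu hju
  obtain ⟨k, hk, rfl⟩ := hall u hu hxu
  rcases hy k hk hju with rfl | rfl
  · exact Or.inr (Finset.Subset.refl _)
  · exact Or.inl rfl

/-- Case: no cycle in the neighbourhood of `x`. -/
theorem case_forest {V : Type u} {H : V → V → Prop} {S : Set V} {x : V} {P : Set V}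
    {L : V → Finset ℕ} (I : Inst H S x P L) (ih : IH V S.ncard)
    (hno : ¬ ∃ g n, Cyc H {v | v ∈ S ∧ H x v} g n) : Col H S x L := by
  classical
  by_cases hN : ∀ v ∈ S, H x v → v ∈ P
  · exact case_small I ih hN
  push Not at hN
  obtain ⟨v0, hv0⟩ := hN
  have : ∃ v ∈ {v | v ∈ S ∧ H x v} \ P, ∀ a ∈ {v | v ∈ S ∧ H x v} \ P,
      ∀ b ∈ {v | v ∈ S ∧ H x v} \ P, H v a → H v b → a = b := by
    by_contra hcon
    push Not at hcon
    obtain ⟨g, n, hg⟩ := exists_cyc (T := {v | v ∈ S ∧ H x v} \ P) I.symm I.irr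
      (I.fin.subset fun v hv => hv.1.1) ⟨v0, ⟨hv0.1, hv0.2.1⟩, hv0.2.2⟩ (by
        intro v hv
        obtain ⟨a, ha, b, hb, h1, h2, h3⟩ := hcon v hv
        exact ⟨a, ha, b, hb, h3, h1, h2⟩)
    exact hno ⟨g, n, hg.three, fun i hi => (hg.mem i hi).1, hg.inj, hg.adj, hg.close⟩
  obtain ⟨v, ⟨⟨hvS, hxv⟩, hvP⟩, huniq⟩ := this
  have hP : ∀ p ∈ P, ∀ q ∈ P, H v p → H v q → p = q := by
    intro p hp q hq hvp hvq
    by_contra hpq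
    apply hno
    refine ⟨fun t => if t = 0 then v else if t = 1 then p else q, 3, le_rfl, ?_, ?_, ?_, ?_⟩
    · intro i hi
      have hpS := I.PS hp
      have hqS := I.PS hq
      have h1 := I.PN p hp
      have h2 := I.PN q hq
      interval_cases i <;> simp [*]
    · have h1 : v ≠ p := by rintro rfl; exact hvP hp
      have h2 : v ≠ q := by rintro rfl; exact hvP hq
      intro i hi j hj
      interval_cases i <;> interval_cases j <;> simp [h1, h2, hpq, h1.symm, h2.symm, Ne.symm hpq]
    · intro i hi
      have hi' : i < 2 := by omega
      interval_cases i
      · simpa using hvp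
      · simpa using (I.Pcl p hp q hq hpq).1
    · simpa using I.symm _ _ hvq
  obtain ⟨T, hT, hTP⟩ : ∃ T : Finset ℕ, T.card ≤ 1 ∧ ∀ p ∈ P, H v p → L p ⊆ T := by
    by_cases h : ∃ p ∈ P, H v p
    · obtain ⟨p, hp, hvp⟩ := h
      exact ⟨L p, (I.P1 p hp).le, fun q hq hvq => by rw [hP q hq p hp hvq hvp]⟩
    · exact ⟨∅, by simp, fun p hp hvp => (h ⟨p, hp, hvp⟩).elim⟩
  obtain ⟨y, hy⟩ : ∃ y, ∀ u ∈ S, H x u → u ∉ P → H v u → u = y := by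
    by_cases h : ∃ u ∈ S, H x u ∧ u ∉ P ∧ H v u
    · obtain ⟨u, h1, h2, h3, h4⟩ := h
      exact ⟨u, fun w g1 g2 g3 g4 => huniq w ⟨⟨g1, g2⟩, g3⟩ u ⟨⟨h1, h2⟩, h3⟩ g4 h4⟩
    · exact ⟨v, fun w g1 g2 g3 g4 => (h ⟨w, g1, g2, g3, g4⟩).elim⟩
  refine case_good I ih v hvS hxv hvP T y hT ?_
  intro u hu hxu hvu
  by_cases h : u ∈ P
  · exact Or.inr (hTP u h hvu)
  · exact Or.inl (hy u hu hxu h hvu)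

/-- Case: some neighbour of `x` is not on the cycle. -/
theorem case_outside {V : Type u} {H : V → V → Prop} {S : Set V} {x : V} {P : Set V}
    {L : V → Finset ℕ} (I : Inst H S x P L) (ih : IH V S.ncard) (g : ℕ → V) (n : ℕ)
    (hg : Cyc H {v | v ∈ S ∧ H x v} g n) (w : V) (hwS : w ∈ S) (hxw : H x w)
    (hw : ∀ t < n, w ≠ g t) : Col H S x L := by
  classical
  have h3 := hg.three
  have hgx : ∀ t < n, g t ≠ x := by
    intro t ht h
    have := (hg.mem t ht).2
    rw [h] at this
    exact I.irr _ this
  have hwx : w ≠ x := by rintro rfl; exact I.irr _ hxw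
  let Q : Set V := {v | v ∈ S ∧ v ≠ x ∧ ∀ t < n, v ≠ g t}
  let D : Set V := {v | Relation.ReflTransGen (fun a b => H a b ∧ a ∈ Q ∧ b ∈ Q) w v}
  have hwD : w ∈ D := Relation.ReflTransGen.refl
  have hwQ : w ∈ Q := ⟨hwS, hwx, hw⟩
  have hDQ : ∀ v ∈ D, v ∈ Q := by
    intro v hv
    rcases Relation.ReflTransGen.cases_tail hv with rfl | ⟨_, _, h⟩
    · exact hwQ
    · exact h.2.2
  have hDcl : ∀ a ∈ D, ∀ b ∈ Q, H a b → b ∈ D := fun a ha b hb hab =>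
    Relation.ReflTransGen.tail ha ⟨hab, hDQ a ha, hb⟩
  have hDconn : KConn H D := by
    apply KConn.of_root I.symm w
    intro a ha
    have ha' : Relation.ReflTransGen (fun a b => H a b ∧ a ∈ Q ∧ b ∈ Q) w a := ha
    clear ha
    induction ha' with
    | refl => exact .refl
    | tail h1 h2 ih => exact ih.tail ⟨h2.1, h1, h1.tail h2⟩
  -- at most two attachments
  have hatt : ∀ i j k, i < j → j < k → k < n → (∃ d ∈ D, H d (g i)) → (∃ d ∈ D, H d (g j)) →
      (∃ d ∈ D, H d (g k)) → False := by
    rintro i j k hij hjk hkn ⟨d1, hd1, e1⟩ ⟨d2, hd2, e2⟩ ⟨d3, hd3, e3⟩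
    apply I.nok
    let J : ℕ → ℕ → Set V := fun a b => {v | ∃ t, a ≤ t ∧ t < b ∧ v = g t}
    have hJS : ∀ a b, b ≤ n → J a b ⊆ S := by
      rintro a b hb v ⟨t, _, ht, rfl⟩
      exact (hg.mem t (by omega)).1
    have hJJ : ∀ a b c d, b ≤ c → d ≤ n → Disjoint (J a b) (J c d) := by
      intro a b c d hbc hd
      rw [Set.disjoint_left]
      rintro v ⟨t, _, ht, rfl⟩ ⟨s, hs, hs', hst⟩
      have := hg.inj _ (by omega) _ (by omega) hst
      omega
    have hxJ : ∀ a b, b ≤ n → x ∉ J a b := by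
      rintro a b hb ⟨t, _, ht, h⟩
      exact hgx t (by omega) h.symm
    have hDJ : ∀ a b, b ≤ n → Disjoint D (J a b) := by
      intro a b hb
      rw [Set.disjoint_left]
      rintro v hv ⟨t, _, ht, h⟩
      exact (hDQ v hv).2.2 t (by omega) h
    have hxD : x ∉ D := fun h => (hDQ x h).2.1 rfl
    have hadj01 : ∃ a ∈ ({x} : Set V), ∃ b ∈ D, H a b := ⟨x, rfl, w, hwD, hxw⟩
    have hadj0J : ∀ a b t, a ≤ t → t < b → b ≤ n →
        ∃ u ∈ ({x} : Set V), ∃ v ∈ J a b, H u v := fun a b t h1 h2 h3 =>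
      ⟨x, rfl, g t, ⟨t, h1, h2, rfl⟩, (hg.mem t (by omega)).2⟩
    have symE : ∀ {X Y : Set V}, (∃ a ∈ X, ∃ b ∈ Y, H a b) → ∃ a ∈ Y, ∃ b ∈ X, H a b := by
      rintro X Y ⟨a, ha, b, hb, hab⟩
      exact ⟨b, hb, a, ha, I.symm _ _ hab⟩
    have a02 := hadj0J 0 j i (by omega) hij (by omega)
    have a03 := hadj0J j k j le_rfl hjk (by omega)
    have a04 := hadj0J k n k le_rfl hkn le_rfl
    have a12 : ∃ u ∈ D, ∃ v ∈ J 0 j, H u v := ⟨d1, hd1, g i, ⟨i, by omega, hij, rfl⟩, e1⟩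
    have a13 : ∃ u ∈ D, ∃ v ∈ J j k, H u v := ⟨d2, hd2, g j, ⟨j, le_rfl, hjk, rfl⟩, e2⟩
    have a14 : ∃ u ∈ D, ∃ v ∈ J k n, H u v := ⟨d3, hd3, g k, ⟨k, le_rfl, hkn, rfl⟩, e3⟩
    have a23 : ∃ u ∈ J 0 j, ∃ v ∈ J j k, H u v := by
      refine ⟨g (j - 1), ⟨j - 1, by omega, by omega, rfl⟩, g j, ⟨j, le_rfl, hjk, rfl⟩, ?_⟩
      have := hg.adj (j - 1) (by omega)
      rwa [Nat.sub_add_cancel (by omega)] at this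
    have a34 : ∃ u ∈ J j k, ∃ v ∈ J k n, H u v := by
      refine ⟨g (k - 1), ⟨k - 1, by omega, by omega, rfl⟩, g k, ⟨k, le_rfl, hkn, rfl⟩, ?_⟩
      have := hg.adj (k - 1) (by omega)
      rwa [Nat.sub_add_cancel (by omega)] at this
    have a24 : ∃ u ∈ J 0 j, ∃ v ∈ J k n, H u v :=
      ⟨g 0, ⟨0, le_rfl, by omega, rfl⟩, g (n - 1), ⟨n - 1, by omega, by omega, rfl⟩,
        I.symm _ _ hg.close⟩
    have d01 : Disjoint ({x} : Set V) D := Set.disjoint_singleton_left.2 hxD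
    have d02 : Disjoint ({x} : Set V) (J 0 j) := Set.disjoint_singleton_left.2 (hxJ _ _ (by omega))
    have d03 : Disjoint ({x} : Set V) (J j k) := Set.disjoint_singleton_left.2 (hxJ _ _ (by omega))
    have d04 : Disjoint ({x} : Set V) (J k n) := Set.disjoint_singleton_left.2 (hxJ _ _ (by omega))
    have d12 := hDJ 0 j (by omega)
    have d13 := hDJ j k (by omega)
    have d14 := hDJ k n (by omega)
    have d23 := hJJ 0 j j k le_rfl (by omega)
    have d24 := hJJ 0 j k n (by omega) (by omega)
    have d34 := hJJ j k k n le_rfl le_rfl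
    refine ⟨![{x}, D, J 0 j, J j k, J k n], ?_, ?_, ?_, ?_, ?_⟩
    · intro r
      fin_cases r
      · exact Set.singleton_subset_iff.2 I.xS
      · exact fun v hv => (hDQ v hv).1
      · exact hJS _ _ (by omega)
      · exact hJS _ _ (by omega)
      · exact hJS _ _ (by omega)
    · intro r
      fin_cases r
      · exact ⟨x, rfl⟩
      · exact ⟨w, hwD⟩
      · exact ⟨g 0, 0, le_rfl, by omega, rfl⟩
      · exact ⟨g j, j, le_rfl, by omega, rfl⟩
      · exact ⟨g k, k, le_rfl, by omega, rfl⟩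
    · intro r
      fin_cases r
      · exact KConn.singleton H x
      · exact hDconn
      · exact cyc_interval I.symm hg _ _ (by omega)
      · exact cyc_interval I.symm hg _ _ (by omega)
      · exact cyc_interval I.symm hg _ _ (by omega)
    · intro r s hrs
      fin_cases r <;> fin_cases s <;>
        first | exact (hrs rfl).elim | assumption | (apply Disjoint.symm; assumption)
    · intro r s hrs
      fin_cases r <;> fin_cases s <;>
        first | exact (hrs rfl).elim | assumption | (apply symE; assumption)
  -- the two attachment indices
  obtain ⟨i, j, hij, hjn, honly, hconn⟩ : ∃ i j, i < j ∧ j < n ∧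
      (∀ t < n, (∃ d ∈ D, H d (g t)) → t = i ∨ t = j) ∧
      (((∃ d ∈ D, H d (g i)) ∧ (∃ d ∈ D, H d (g j))) ∨ H (g i) (g j)) := by
    by_cases h : ∃ i j, i < j ∧ j < n ∧ (∃ d ∈ D, H d (g i)) ∧ (∃ d ∈ D, H d (g j))
    · obtain ⟨i, j, hij, hjn, hi, hj⟩ := h
      refine ⟨i, j, hij, hjn, ?_, Or.inl ⟨hi, hj⟩⟩
      intro t ht hd
      by_contra hcon
      push Not at hcon
      obtain ⟨h1, h2⟩ := hcon
      rcases lt_trichotomy t i with h | h | h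
      · exact hatt t i j h hij hjn hd hi hj
      · exact h1 h
      · rcases lt_trichotomy t j with h' | h' | h'
        · exact hatt i t j h h' hjn hi hd hj
        · exact h2 h'
        · exact hatt i j t hij h' ht hi hj hd
    · by_cases h' : ∃ i < n, ∃ d ∈ D, H d (g i)
      · obtain ⟨i, hi, hd⟩ := h'
        have huni : ∀ t < n, (∃ d ∈ D, H d (g t)) → t = i := by
          intro t ht hd'
          by_contra hti
          rcases lt_or_gt_of_ne hti with h1 | h1
          · exact h ⟨t, i, h1, hi, hd', hd⟩
          · exact h ⟨i, t, h1, ht, hd, hd'⟩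
        by_cases hi' : i + 1 < n
        · exact ⟨i, i + 1, by omega, hi', fun t ht hd => Or.inl (huni t ht hd),
            Or.inr (hg.adj i hi')⟩
        · refine ⟨i - 1, i, by omega, hi, fun t ht hd => Or.inr (huni t ht hd), Or.inr ?_⟩
          have := hg.adj (i - 1) (by omega)
          rwa [Nat.sub_add_cancel (by omega)] at this
      · exact ⟨0, 1, by omega, by omega, fun t ht hd => (h' ⟨t, ht, hd⟩).elim,
          Or.inr (hg.adj 0 (by omega))⟩
  have hin : i < n := by omega
  set c := g i with hc
  set d := g j with hd
  have hcS : c ∈ S ∧ H x c := hg.mem i hin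
  have hdS : d ∈ S ∧ H x d := hg.mem j hjn
  have hcd : c ≠ d := fun h => by have := hg.inj i hin j hjn h; omega
  have hcD : c ∉ D := fun h => (hDQ c h).2.2 i hin rfl
  have hdD : d ∉ D := fun h => (hDQ d h).2.2 j hjn rfl
  have hxD : x ∉ D := fun h => (hDQ x h).2.1 rfl
  -- neighbours of `D`
  have hND : ∀ a ∈ D, ∀ b ∈ S, H a b → b ∈ D ∨ b = x ∨ b = c ∨ b = d := by
    intro a ha b hb hab
    by_cases hbQ : b ∈ Q
    · exact Or.inl (hDcl a ha b hbQ hab)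
    · by_cases hbx : b = x
      · exact Or.inr (Or.inl hbx)
      · have : ∃ t < n, b = g t := by
          by_contra hcon
          push Not at hcon
          exact hbQ ⟨hb, hbx, hcon⟩
        obtain ⟨t, ht, rfl⟩ := this
        rcases honly t ht ⟨a, ha, hab⟩ with rfl | rfl
        · exact Or.inr (Or.inr (Or.inl rfl))
        · exact Or.inr (Or.inr (Or.inr rfl))
  let A : Set V := S \ D
  let B : Set V := {v | v ∈ D ∨ v = x ∨ v = c ∨ v = d}
  have hAS : A ⊆ S := Set.sdiff_subset
  have hBS : B ⊆ S := by
    rintro v (h | rfl | rfl | rfl)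
    · exact (hDQ v h).1
    · exact I.xS
    · exact hcS.1
    · exact hdS.1
  have hAlt : A.ncard < S.ncard := Set.ncard_lt_ncard ⟨hAS, fun h => (h hwS).2 hwD⟩ I.fin
  obtain ⟨k, hkn, hki, hkj⟩ : ∃ k < n, k ≠ i ∧ k ≠ j := by
    by_cases h0 : i = 0
    · by_cases h1 : j = 1
      · exact ⟨2, by omega, by omega, by omega⟩
      · exact ⟨1, by omega, by omega, by omega⟩
    · exact ⟨0, by omega, by omega, by omega⟩
  have hkB : g k ∉ B := by
    rintro (h | h | h | h)
    · exact (hDQ _ h).2.2 k hkn rfl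
    · exact hgx k hkn h
    · exact hki (hg.inj _ hkn _ hin h)
    · exact hkj (hg.inj _ hkn _ hjn h)
  have hBlt : B.ncard < S.ncard :=
    Set.ncard_lt_ncard ⟨hBS, fun h => hkB (h (hg.mem k hkn).1)⟩ I.fin
  have kA : ¬ K5M (addE H c d) A := by
    rcases hconn with ⟨⟨d1, hd1, e1⟩, ⟨d2, hd2, e2⟩⟩ | h
    · refine nok_addE (insert c D) I.symm hAS ?_ (Set.mem_insert _ _)
        (hDconn.insert I.symm hd1 (I.symm _ _ e1)) ?_ ⟨d2, Or.inr hd2, e2⟩ hcd I.nok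
      · rintro v (rfl | hv)
        · exact hcS.1
        · exact (hDQ v hv).1
      · rintro v (rfl | hv) hvA
        · rfl
        · exact (hvA.2 hv).elim
    · exact nok_addE {c} I.symm hAS (Set.singleton_subset_iff.2 hcS.1) rfl (KConn.singleton H c)
        (fun v hv _ => hv) ⟨c, rfl, h⟩ hcd I.nok
  have kB : ¬ K5M (addE H c d) B := by
    refine nok_addE {v | ∃ t, i ≤ t ∧ t < j ∧ v = g t} I.symm hBS ?_ ⟨i, le_rfl, hij, rfl⟩
      (cyc_interval I.symm hg _ _ (by omega)) ?_ ?_ hcd I.nok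
    · rintro v ⟨t, _, ht, rfl⟩
      exact (hg.mem t (by omega)).1
    · rintro v ⟨t, _, ht, rfl⟩ (h | h | h | h)
      · exact ((hDQ _ h).2.2 t (by omega) rfl).elim
      · exact (hgx t (by omega) h).elim
      · exact h
      · have := hg.inj _ (by omega) _ hjn h
        omega
    · refine ⟨g (j - 1), ⟨j - 1, by omega, by omega, rfl⟩, ?_⟩
      have := hg.adj (j - 1) (by omega)
      rwa [Nat.sub_add_cancel (by omega)] at this
  have hAB : ∀ s ∈ S, s ∈ A ∨ s ∈ B := by
    intro s hs
    by_cases h : s ∈ D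
    · exact Or.inr (Or.inl h)
    · exact Or.inl ⟨hs, h⟩
  have hxAB : x ∈ A ∧ x ∈ B := ⟨⟨I.xS, hxD⟩, Or.inr (Or.inl rfl)⟩
  have hcAB : c ∈ A ∧ c ∈ B := ⟨⟨hcS.1, hcD⟩, Or.inr (Or.inr (Or.inl rfl))⟩
  have hdAB : d ∈ A ∧ d ∈ B := ⟨⟨hdS.1, hdD⟩, Or.inr (Or.inr (Or.inr rfl))⟩
  have hI : ∀ s, s ∈ A → s ∈ B → s = x ∨ s = c ∨ s = d := by
    rintro s ⟨_, hs⟩ (h | h)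
    · exact (hs h).elim
    · exact h
  have hE : ∀ b ∈ B, ∀ a ∈ A, H b a → b ∈ A ∨ a ∈ B := by
    intro b hb a ha hba
    by_cases h : b ∈ D
    · exact Or.inr (hND b h a ha.1 hba)
    · exact Or.inl ⟨hBS hb, h⟩
  by_cases hPD : ∃ p ∈ P, p ∈ D
  · obtain ⟨p, hp, hpD⟩ := hPD
    have hPB : P ⊆ B := by
      intro q hq
      by_cases hqp : q = p
      · exact Or.inl (hqp ▸ hpD)
      · exact hND p hpD q (I.PS hq) (I.Pcl p hp q hq (Ne.symm hqp)).1
    exact case_sep I ih B A c d hcd hcS.2 hdS.2 hBS hAS (fun s hs => (hAB s hs).symm)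
      hxAB.symm hcAB.symm hdAB.symm (fun s h1 h2 => hI s h2 h1) hE hBlt hAlt kB kA hPB
  · exact case_sep I ih A B c d hcd hcS.2 hdS.2 hAS hBS hAB hxAB hcAB hdAB hI
      (fun a ha b hb hab => (hE b hb a ha (I.symm _ _ hab)).symm) hAlt hBlt kA kB
      (fun p hp => ⟨I.PS hp, fun h => hPD ⟨p, hp, h⟩⟩)

theorem main_ind {V : Type u} (n : ℕ) : IH V n := by
  classical
  induction n with
  | zero => intro H S x P L I h; omega
  | succ n ihn =>
    intro H S x P L I hlt
    have ih : IH V S.ncard := fun H' S' x' P' L' I' h' => ihn H' S' x' P' L' I' (by omega)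
    by_cases hcyc : ∃ g n, Cyc H {v | v ∈ S ∧ H x v} g n
    · obtain ⟨g, n, hg, hch⟩ := exists_chordless I.symm hcyc
      by_cases hall : ∀ v ∈ S, H x v → ∃ t < n, v = g t
      · rcases P.eq_empty_or_nonempty with hP | hP
        · have h3 := hg.three
          have h0 := hg.mem 0 (by omega)
          have h0x : g 0 ≠ x := by
            intro h
            have := h0.2
            rw [h] at this
            exact I.irr _ this
          obtain ⟨a, ha⟩ : (L (g 0)).Nonempty := by
            rw [← Finset.card_pos]
            have := I.L3 (g 0) h0.1 h0x (by simp [hP])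
            omega
          have I' : Inst H S x {g 0} (Function.update L (g 0) {a}) := by
            refine ⟨I.symm, I.irr, I.fin, I.xS, I.nok, Set.singleton_subset_iff.2 h0.1, ?_, ?_,
              ?_, ?_, ?_, ?_⟩
            · rintro p rfl; exact h0.2
            · rintro p rfl q rfl h; exact (h rfl).elim
            · rintro p rfl q rfl r rfl; simp
            · rintro p rfl; simp
            · intro v hv hvx hv0
              rw [Function.update_of_ne hv0]
              exact I.L3 v hv hvx (by simp [hP])
            · intro v hv hvx hxv
              have : v ≠ g 0 := by rintro rfl; exact hxv h0.2
              rw [Function.update_of_ne this]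
              exact I.L5 v hv hvx hxv
          obtain ⟨φ, h1, h2⟩ := case_cycle I' ih g n hg hch hall ⟨g 0, rfl⟩
          refine ⟨φ, fun v hv hvx => ?_, h2⟩
          have := h1 v hv hvx
          by_cases h : v = g 0
          · subst h
            simp only [Function.update_self, Finset.mem_singleton] at this
            rw [this]; exact ha
          · rwa [Function.update_of_ne h] at this
        · exact case_cycle I ih g n hg hch hall hP
      · push Not at hall
        obtain ⟨w, hwS, hxw, hw⟩ := hall
        exact case_outside I ih g n hg w hwS hxw hw
    · exact case_forest I ih hcyc

/-- Finite graphs without a `K₅`-minor are 5-choosable. -/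
theorem five_choosable_of_noK5 {V : Type u} (H : V → V → Prop) (S : Set V)
    (hs : ∀ u v, H u v → H v u) (hir : ∀ v, ¬ H v v) (hfin : S.Finite) (hk : ¬ K5M H S)
    (L : V → Finset ℕ) (h5 : ∀ v ∈ S, 5 ≤ (L v).card) :
    ∃ φ : V → ℕ, (∀ v ∈ S, φ v ∈ L v) ∧ ∀ u ∈ S, ∀ v ∈ S, H u v → φ u ≠ φ v := by
  classical
  rcases S.eq_empty_or_nonempty with rfl | ⟨x, hx⟩
  · exact ⟨fun _ => 0, by simp, by simp⟩
  obtain ⟨c, hc⟩ : (L x).Nonempty := by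
    rw [← Finset.card_pos]
    have := h5 x hx
    omega
  have I : Inst H S x ∅ (fun v => if H x v then L v \ {c} else L v) := by
    refine ⟨hs, hir, hfin, hx, hk, by simp, by simp, by simp, by simp, by simp, ?_, ?_⟩
    · intro v hv hvx _
      have := h5 v hv
      have := Finset.le_card_sdiff {c} (L v)
      simp at this
      split_ifs <;> omega
    · intro v hv hvx hxv
      simpa [hxv] using h5 v hv
  obtain ⟨φ, h1, h2⟩ := main_ind (S.ncard + 1) _ _ _ _ _ I (by omega)
  have h1' : ∀ v ∈ S, v ≠ x → φ v ∈ L v ∧ (H x v → φ v ≠ c) := by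
    intro v hv hvx
    have := h1 v hv hvx
    beta_reduce at this
    split_ifs at this with h <;> simp_all
  refine ⟨Function.update φ x c, ?_, ?_⟩
  · intro v hv
    by_cases h : v = x
    · subst h; simpa using hc
    · simpa [h] using (h1' v hv h).1
  · intro u hu v hv huv
    by_cases h : u = x
    · subst h
      have hvu : v ≠ u := by rintro rfl; exact hir _ huv
      simpa [hvu] using ((h1' v hv hvu).2 huv).symm
    · by_cases h' : v = x
      · subst h'
        simpa [h] using (h1' u hu h).2 (hs _ _ huv)
      · simpa [h, h'] using h2 u hu v hv h h' huv


section Link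

variable {V : Type u}

/-- The drawing of the subgraph induced on `T`. -/
def PlaneGraph.drawn (G : PlaneGraph V) (T : Set V) : Set (ℝ × ℝ) :=
  {p | (∃ v ∈ T, G.pos v = p) ∨ ∃ u ∈ T, ∃ v ∈ T, G.Adj u v ∧ p ∈ G.arc s(u, v)}

theorem PlaneGraph.drawn_mono (G : PlaneGraph V) {T T' : Set V} (h : T ⊆ T') :
    G.drawn T ⊆ G.drawn T' := by
  rintro p (⟨v, hv, rfl⟩ | ⟨u, hu, v, hv, ha, hp⟩)
  · exact Or.inl ⟨v, h hv, rfl⟩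
  · exact Or.inr ⟨u, h hu, v, h hv, ha, hp⟩

theorem PlaneGraph.drawn_disjoint (G : PlaneGraph V) {T T' : Set V} (hT : T ⊆ G.verts)
    (hT' : T' ⊆ G.verts) (hd : Disjoint T T') (p : ℝ × ℝ) (h1 : p ∈ G.drawn T)
    (h2 : p ∈ G.drawn T') : False := by
  have hne : ∀ a ∈ T, ∀ b ∈ T', a ≠ b := fun a ha b hb => Set.disjoint_iff_forall_ne.1 hd ha hb
  rcases h1 with ⟨v, hv, rfl⟩ | ⟨u, hu, v, hv, ha, hp⟩
  · rcases h2 with ⟨w, hw, he⟩ | ⟨x, hx, y, hy, hb, hq⟩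
    · exact hne v hv w hw (G.pos_injOn (hT hv) (hT' hw) he.symm)
    · rcases G.arc_avoid x y hb v (hT hv) hq with h | h
      · exact hne v hv x hx h
      · exact hne v hv y hy h
  · rcases h2 with ⟨w, hw, rfl⟩ | ⟨x, hx, y, hy, hb, hq⟩
    · rcases G.arc_avoid u v ha w (hT' hw) hp with h | h
      · exact hne u hu w hw h.symm
      · exact hne v hv w hw h.symm
    · have hs : s(u, v) ≠ s(x, y) := by
        intro h
        rcases Sym2.eq_iff.1 h with h | h
        · exact hne u hu x hx h.1
        · exact hne u hu y hy h.1
      obtain ⟨w, ⟨hw1, hw2⟩, -⟩ := G.arc_meet u v x y ha hb hs ⟨hp, hq⟩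
      have h1 : w ∈ T := by
        rcases hw1 with rfl | rfl <;> assumption
      have h2 : w ∈ T' := by
        rcases hw2 with rfl | rfl <;> assumption
      exact hne w h1 w h2 rfl

theorem PlaneGraph.joined_edge (G : PlaneGraph V) {T : Set V} {u v : V} (hu : u ∈ T)
    (hv : v ∈ T) (ha : G.Adj u v) : JoinedIn (G.drawn T) (G.pos u) (G.pos v) := by
  obtain ⟨f, hf, -, him, h0, h1⟩ := G.arc_arc u v ha
  refine JoinedIn.ofLine (f := f) hf h0 h1 ?_
  change f '' Set.Icc 0 1 ⊆ _
  rw [him]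
  exact fun p hp => Or.inr ⟨u, hu, v, hv, ha, hp⟩

theorem PlaneGraph.joined_rtg (G : PlaneGraph V) {T : Set V} {u v : V} (hu : u ∈ T)
    (h : Relation.ReflTransGen (fun u v => G.Adj u v ∧ u ∈ T ∧ v ∈ T) u v) :
    JoinedIn (G.drawn T) (G.pos u) (G.pos v) := by
  induction h with
  | refl => exact JoinedIn.refl (Or.inl ⟨u, hu, rfl⟩)
  | tail _ h ih => exact ih.trans (G.joined_edge h.2.1 h.2.2 h.1)

theorem PlaneGraph.noK5 (G : PlaneGraph V) : ¬ K5M G.Adj G.verts := by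
  rintro ⟨B, hB, hne, hcn, hdj, hadj⟩
  choose r hr using hne
  have key : ∀ i j, i ≠ j → JoinedIn (G.drawn (B i ∪ B j)) (G.pos (r i)) (G.pos (r j)) := by
    intro i j hij
    obtain ⟨a, ha, b, hb, hab⟩ := hadj i j hij
    have e1 := (G.joined_rtg (hr i) (hcn i (r i) (hr i) a ha)).mono
      (G.drawn_mono (Set.subset_union_left (t := B j)))
    have e2 := (G.joined_rtg hb (hcn j b hb (r j) (hr j))).mono
      (G.drawn_mono (Set.subset_union_right (s := B i)))
    exact (e1.trans (G.joined_edge (Or.inl ha) (Or.inr hb) hab)).trans e2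
  have key2 : ∀ i j, ∃ g : ℝ → ℝ × ℝ, i < j → Continuous g ∧ g 0 = G.pos (r i) ∧
      g 1 = G.pos (r j) ∧ ∀ t, g t ∈ G.drawn (B i ∪ B j) := by
    intro i j
    by_cases hij : i < j
    · obtain ⟨p, hp⟩ := key i j hij.ne
      refine ⟨p.extend, fun _ => ⟨p.continuous_extend, p.extend_zero, p.extend_one, ?_⟩⟩
      intro t
      have : p.extend t ∈ Set.range p := by
        rw [← p.extend_range]; exact ⟨t, rfl⟩
      obtain ⟨s, hs⟩ := this
      rw [← hs]; exact hp s
    · exact ⟨fun _ => 0, fun h => absurd h hij⟩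
  choose g hg using key2
  let e := Complex.equivRealProdCLM.symm
  refine no_K5_drawing (fun i => e (G.pos (r i))) (fun i j t => e (g i j t)) ?_ ?_ ?_ ?_
  · intro i j h; exact e.continuous.comp (hg i j h).1
  · intro i j h; simp only [(hg i j h).2.1]
  · intro i j h; simp only [(hg i j h).2.2.1]
  · intro i j k l hij hkl h1 h2 h3 h4 s t hst
    have hst' : g i j s = g k l t := e.injective hst
    refine G.drawn_disjoint (T := B i ∪ B j) (T' := B k ∪ B l)
      (Set.union_subset (hB i) (hB j)) (Set.union_subset (hB k) (hB l)) ?_ (g i j s)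
      ((hg i j hij).2.2.2 s) (hst' ▸ (hg k l hkl).2.2.2 t)
    rw [Set.disjoint_union_left, Set.disjoint_union_right, Set.disjoint_union_right]
    exact ⟨⟨hdj _ _ h1, hdj _ _ h2⟩, ⟨hdj _ _ h3, hdj _ _ h4⟩⟩

end Link


/-- Thomassen: every planar graph is 5-choosable; that is, for
every (finite, simple) planar graph `G`, given by a plane embedding, and every
list assignment `L` with `|L(v)| ≥ 5` for every vertex `v` of `G`, `G` has an
`L`-coloring. -/
theorem planar_graphs_are_five_choosable {V : Type u} (G : PlaneGraph V)
    (L : V → Finset ℕ)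
    (h5 : ∀ v ∈ G.verts, 5 ≤ (L v).card) :
    G.HasLColoring L := by
  obtain ⟨φ, h1, h2⟩ := five_choosable_of_noK5 G.Adj G.verts G.adj_symm G.adj_irrefl
    G.finite_verts G.noK5 L h5
  exact ⟨φ, h1, fun u v h => h2 u (G.adj_mem u v h) v (G.adj_mem v u (G.adj_symm u v h)) h⟩
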